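/- Let X be a tree and let f : X → X be a continuous map with zero topological entropy. Let x be a chain recurrent point of f that is not periodic, and let I be a periodic arc of f such that ω_f(x) ⊆ Orb_f(I). Then for every n ≥ 0, f^{-n}(x) ∩ CR(f) ⊆ Orb_f(I). -/

import Mathlib

open Set Filter Topology Function
open scoped ENNReal

/-- A subset of a topological space is an *arc* if it is homeomorphic to `[0,1]`. -/
def IsArc {X : Type*} [TopologicalSpace X] (A : Set X) : Prop :=
  Nonempty (A ≃ₜ Set.Icc (0 : ℝ) 1)

/-- A point `p` is an *endpoint* of the arc `A` if `p ∈ A` and `A \ {p}` is connected. -/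
def IsArcEndpoint {X : Type*} [TopologicalSpace X] (A : Set X) (p : X) : Prop :=
  p ∈ A ∧ IsConnected (A \ {p})

/-- A subset is a *simple closed curve* if it is homeomorphic to the unit circle. -/
def IsSimpleClosedCurve {X : Type*} [TopologicalSpace X] (S : Set X) : Prop :=
  Nonempty (S ≃ₜ Metric.sphere (0 : ℂ) 1)

/-- A *tree* is a compact connected metric space which is a union of finitely many arcs,
any two of which are disjoint or intersect only in (one or both of) their endpoints,
and which contains no simple closed curve. -/
def IsTree (X : Type*) [MetricSpace X] : Prop :=
  CompactSpace X ∧ ConnectedSpace X ∧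
    (∃ 𝒜 : Finset (Set X), (∀ A ∈ 𝒜, IsArc A) ∧ ⋃₀ (𝒜 : Set (Set X)) = Set.univ ∧
      ∀ A ∈ 𝒜, ∀ B ∈ 𝒜, A ≠ B → ∀ p ∈ A ∩ B, IsArcEndpoint A p ∧ IsArcEndpoint B p) ∧
    ∀ S : Set X, ¬ IsSimpleClosedCurve S

/-- A *dendrite* is a locally connected continuum containing no simple closed curve. -/
def IsDendrite (X : Type*) [MetricSpace X] : Prop :=
  CompactSpace X ∧ ConnectedSpace X ∧ LocallyConnectedSpace X ∧
    ∀ S : Set X, ¬ IsSimpleClosedCurve S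

/-- `𝒰` is a finite open cover of the subset `Y`. -/
def IsOpenCoverOn {X : Type*} [TopologicalSpace X] (Y : Set X) (𝒰 : Finset (Set X)) : Prop :=
  (∀ U ∈ 𝒰, IsOpen U) ∧ Y ⊆ ⋃₀ (𝒰 : Set (Set X))

/-- `N(⋁_{i=1}^n f^{-a_i}(𝒰))`, relative to the subset `Y`: the minimal number `m` of elements
of the join cover `⋁_{i=1}^n f^{-a_i}(𝒰)` needed to cover `Y`. -/
noncomputable def seqCoverCountOn {X : Type*} (f : X → X) (Y : Set X) (a : ℕ → ℕ)
    (𝒰 : Finset (Set X)) (n : ℕ) : ℕ :=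
  sInf { m | ∃ c : Fin m → Fin n → Set X, (∀ j i, c j i ∈ 𝒰) ∧
    Y ⊆ ⋃ j, ⋂ i, f^[a i.1] ⁻¹' c j i }

/-- Topological sequence entropy of `f` restricted to the (invariant) subset `Y`,
with respect to the sequence `a`. -/
noncomputable def seqEntropyOn {X : Type*} [TopologicalSpace X] (f : X → X) (Y : Set X)
    (a : ℕ → ℕ) : ℝ≥0∞ :=
  ⨆ (𝒰 : Finset (Set X)) (_ : IsOpenCoverOn Y 𝒰),
    Filter.limsup
      (fun n : ℕ => ENNReal.ofReal (Real.log (seqCoverCountOn f Y a 𝒰 n) / n)) Filter.atTop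

/-- Topological sequence entropy of `f : X → X` with respect to the sequence `a`. -/
noncomputable def seqEntropy {X : Type*} [TopologicalSpace X] (f : X → X) (a : ℕ → ℕ) : ℝ≥0∞ :=
  seqEntropyOn f Set.univ a

/-- The ordinary topological entropy `h(f)`, i.e. the sequence entropy for `A = (0,1,2,…)`. -/
noncomputable def topEntropy {X : Type*} [TopologicalSpace X] (f : X → X) : ℝ≥0∞ :=
  seqEntropy f id

/-- `h_∞(f|_Y)`: the supremum over all strictly increasing sequences of positive integers of
the topological sequence entropies of `f` restricted to `Y`. -/
noncomputable def supSeqEntropyOn {X : Type*} [TopologicalSpace X] (f : X → X) (Y : Set X) :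
    ℝ≥0∞ :=
  ⨆ (a : ℕ → ℕ) (_ : StrictMono a) (_ : 1 ≤ a 0), seqEntropyOn f Y a

/-- `h_∞(f)`: the supremum of the topological sequence entropies of `f`. -/
noncomputable def supSeqEntropy {X : Type*} [TopologicalSpace X] (f : X → X) : ℝ≥0∞ :=
  supSeqEntropyOn f Set.univ

/-- The ω-limit set `ω_f(x) = ⋂_n closure {f^k(x) : k ≥ n}`. -/
def omegaLimitSet {X : Type*} [TopologicalSpace X] (f : X → X) (x : X) : Set X :=
  ⋂ n : ℕ, closure ((fun k => f^[k] x) '' Set.Ici n)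

/-- `ω(f) = ⋃_x ω_f(x)`. -/
def omegaSet {X : Type*} [TopologicalSpace X] (f : X → X) : Set X :=
  ⋃ x : X, omegaLimitSet f x

/-- The non-wandering set `Ω(f)`. -/
def nonWanderingSet {X : Type*} [TopologicalSpace X] (f : X → X) : Set X :=
  { x | ∀ U : Set X, IsOpen U → x ∈ U → ∃ n, 1 ≤ n ∧ (f^[n] ⁻¹' U ∩ U).Nonempty }

/-- There is an ε-chain from `x` to `y` under `f`. -/
def EpsChain {X : Type*} [MetricSpace X] (f : X → X) (ε : ℝ) (x y : X) : Prop :=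
  ∃ n, 1 ≤ n ∧ ∃ c : ℕ → X, c 0 = x ∧ c n = y ∧ ∀ i < n, dist (f (c i)) (c (i + 1)) < ε

/-- The chain recurrent set `CR(f)`. -/
def chainRecurrentSet {X : Type*} [MetricSpace X] (f : X → X) : Set X :=
  { x | ∀ ε > 0, EpsChain f ε x x }

/-- The chain recurrent set of the restriction `f|_Y`: chain recurrence witnessed by
ε-chains lying entirely inside `Y`. -/
def chainRecurrentSetOn {X : Type*} [MetricSpace X] (f : X → X) (Y : Set X) : Set X :=
  { x ∈ Y | ∀ ε > 0, ∃ n, 1 ≤ n ∧ ∃ c : ℕ → X, c 0 = x ∧ c n = x ∧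
      (∀ i ≤ n, c i ∈ Y) ∧ ∀ i < n, dist (f (c i)) (c (i + 1)) < ε }

/-- `I` is a periodic arc of `f` of period `s`: an arc with `f^s(I) ⊆ I` whose iterates
`I, f(I), …, f^{s-1}(I)` are pairwise disjoint. -/
def IsPeriodicArc {X : Type*} [TopologicalSpace X] (f : X → X) (I : Set X) (s : ℕ) : Prop :=
  IsArc I ∧ 1 ≤ s ∧ Set.MapsTo f^[s] I I ∧
    ∀ i j, i < j → j < s → Disjoint (f^[i] '' I) (f^[j] '' I)

/-- `Orb_f(I) = I ∪ f(I) ∪ … ∪ f^{s-1}(I)`. -/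
def arcOrbit {X : Type*} (f : X → X) (I : Set X) (s : ℕ) : Set X :=
  ⋃ i ∈ Finset.range s, f^[i] '' I

/-- `I` is an independence set for the pair `(U, V)` under `f`. -/
def IsIndepSetPair {X : Type*} (f : X → X) (U V : Set X) (I : Finset ℕ) : Prop :=
  ∀ J ⊆ I, J.Nonempty → ∀ s : ℕ → Bool,
    (⋂ j ∈ J, f^[j] ⁻¹' (if s j then U else V)).Nonempty

/-- `(x, y)` is an IN-pair of `(X, f)`. -/
def INPair {X : Type*} [TopologicalSpace X] (f : X → X) (x y : X) : Prop :=
  ∀ U ∈ nhds x, ∀ V ∈ nhds y, ∀ m : ℕ, ∃ I : Finset ℕ, m ≤ I.card ∧ IsIndepSetPair f U V I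

/-- The set `IN(X, f)` of IN-pairs of `(X, f)`. -/
def INPairs {X : Type*} [TopologicalSpace X] (f : X → X) : Set (X × X) :=
  { p | INPair f p.1 p.2 }

/-- `(x, y)` is an IN-pair of the restricted (sub)system `(Y, f|_Y)`, for `Y` invariant. -/
def INPairOn {X : Type*} [TopologicalSpace X] (f : X → X) (Y : Set X) (x y : X) : Prop :=
  x ∈ Y ∧ y ∈ Y ∧ ∀ U ∈ nhds x, ∀ V ∈ nhds y, ∀ m : ℕ, ∃ I : Finset ℕ, m ≤ I.card ∧
    ∀ J ⊆ I, J.Nonempty → ∀ s : ℕ → Bool,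
      (Y ∩ ⋂ j ∈ J, f^[j] ⁻¹' (if s j then U else V)).Nonempty

/-- `(x, y)` is a Li–Yorke pair for `f`. -/
def LiYorkePair {X : Type*} [MetricSpace X] (f : X → X) (x y : X) : Prop :=
  Filter.liminf (fun n : ℕ => dist (f^[n] x) (f^[n] y)) Filter.atTop = 0 ∧
    0 < Filter.limsup (fun n : ℕ => dist (f^[n] x) (f^[n] y)) Filter.atTop

/-!
A map of zero entropy has no horseshoe, and neither does `g = f^[s]`. The `g`-orbit of a preimage
`y` of `x` converges to a single one of the disjoint `g`-invariant continua `f^[i] '' I`, say `M`,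
and if `y` is chain recurrent, it can be reached from `M` by `ε`-chains of `g` for every `ε > 0`.
The set `Λ` of points with this property is again an invariant continuum, and the claim is that
no point of `Λ \ M` is attracted by `M`.

This is shown by induction on the number of ends that an invariant continuum `Y`, all of whose
points are chain-reachable from the invariant continuum `K ⊆ Y` inside `Y`, has relative to `K`. A
point of `Y` outside `K` that converges to `K` lets one enlarge `K` to an invariant continuum having
an absorbing branch: a component of its complement in `Y` whose attaching point is mapped into the
interior of `K` relative to `Y`. Chain-reachability forces some orbits to leave `K` along another
branch. As there is no horseshoe, the points that emerge from `K` along such a branch never come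
back into it, hence span a continuum with fewer ends, and the induction hypothesis makes this
branch absorbing as well, after enlarging `K` once more. So the number of absorbing branches grows
without bound, although it cannot exceed the number of ends.
-/

section Horseshoe

/-- Horseshoes: two disjoint nonempty closed sets, each of which covers both of them under a
positive iterate of `f`. The two covering times may differ. -/
def HasHorseshoe {X : Type*} [TopologicalSpace X] (f : X → X) : Prop :=
  ∃ Q B : Set X, IsClosed Q ∧ IsClosed B ∧ Q.Nonempty ∧ B.Nonempty ∧ Disjoint Q B ∧
    ∃ m n : ℕ, 1 ≤ m ∧ 1 ≤ n ∧ Q ∪ B ⊆ f^[m] '' Q ∧ Q ∪ B ⊆ f^[n] '' B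

variable {X : Type*}

lemma subset_image_iterate_mul {f : X → X} {Q W : Set X} {n k : ℕ} (hQ : Q ⊆ W)
    (h : W ⊆ f^[n] '' Q) (hk : 1 ≤ k) : W ⊆ f^[n * k] '' Q := by
  induction k, hk using Nat.le_induction with
  | base => simpa using h
  | succ k _ ih =>
    intro x hx
    obtain ⟨y, hy, rfl⟩ := ih hx
    obtain ⟨z, hz, rfl⟩ := h (hQ hy)
    exact ⟨z, hz, by rw [Nat.mul_succ, iterate_add_apply]⟩

lemma exists_itinerary {ι : Type*} {g : X → X} {A : ι → Set X} (hne : ∀ i, (A i).Nonempty)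
    (hcov : ∀ i j, A j ⊆ g '' A i) (L : ℕ) (v : ℕ → ι) : ∃ x, ∀ k ≤ L, g^[k] x ∈ A (v k) := by
  induction L generalizing v with
  | zero =>
    obtain ⟨x, hx⟩ := hne (v 0)
    exact ⟨x, fun k hk => by rwa [Nat.le_zero.1 hk]⟩
  | succ L ih =>
    obtain ⟨_, hx⟩ := ih fun k => v (k + 1)
    obtain ⟨x, hx₀, rfl⟩ := hcov (v 0) (v 1) (hx 0 L.zero_le)
    refine ⟨x, fun k hk => ?_⟩
    cases k with
    | zero => exact hx₀
    | succ k => exact hx k (Nat.succ_le_succ_iff.1 hk)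

lemma le_seqCoverCountOn {f : X → X} {Y : Set X} {a : ℕ → ℕ} {𝒰 : Finset (Set X)} {n N : ℕ}
    (hcov : univ ⊆ ⋃₀ (𝒰 : Set (Set X)))
    (h : ∀ (m : ℕ) (c : Fin m → Fin n → Set X), (∀ j i, c j i ∈ 𝒰) →
      (Y ⊆ ⋃ j, ⋂ i, f^[a i.1] ⁻¹' c j i) → N ≤ m) :
    N ≤ seqCoverCountOn f Y a 𝒰 n := by
  refine le_csInf ?_ fun m ⟨c, hc, hY⟩ => h m c hc hY
  let e := Fintype.equivFin (Fin n → 𝒰)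
  refine ⟨_, fun j i => e.symm j i, fun j i => (e.symm j i).2, fun x _ => ?_⟩
  have hU (i : Fin n) : ∃ U : 𝒰, f^[a i.1] x ∈ (U : Set X) := by
    obtain ⟨U, hU, hx⟩ := hcov (mem_univ (f^[a i.1] x))
    exact ⟨⟨U, hU⟩, hx⟩
  choose U hU using hU
  exact mem_iUnion.2 ⟨e U, mem_iInter.2 fun i => by simpa using hU i⟩

lemma two_pow_le_seqCoverCountOn [DecidableEq (Set X)] {f : X → X} {A : Bool → Set X} {T : ℕ}
    (hT : 1 ≤ T) (hne : ∀ i, (A i).Nonempty) (hd : ∀ i, Disjoint (A i) (A !i))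
    (hcov : ∀ i j, A j ⊆ f^[T] '' A i) (n : ℕ) :
    2 ^ (n / T) ≤ seqCoverCountOn f univ id (Finset.univ.image fun i => (A i)ᶜ) n := by
  refine le_seqCoverCountOn (fun x _ => ?_) fun m c hc hX => ?_
  · by_cases hx : x ∈ A true
    · exact ⟨(A false)ᶜ, by simp, (hd true).notMem_of_mem_left hx⟩
    · exact ⟨(A true)ᶜ, by simp, hx⟩
  -- Along an orbit with itinerary `v`, the member of the cover used at time `k * T` is forced.
  have forced (v : Fin (n / T) → Bool) : ∃ j, ∀ k, ∃ hk : k.1 * T < n,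
      c j ⟨k.1 * T, hk⟩ = (A !v k)ᶜ := by
    obtain ⟨x, hx⟩ := exists_itinerary hne hcov (n / T)
      fun k => if h : k < n / T then v ⟨k, h⟩ else true
    obtain ⟨j, hj⟩ := mem_iUnion.1 (hX (mem_univ x))
    refine ⟨j, fun k => ?_⟩
    have hk : k.1 * T < n := Nat.lt_of_lt_of_le (by gcongr; exact k.2) (Nat.div_mul_le_self n T)
    have hxk : f^[k.1 * T] x ∈ A (v k) := by
      simpa [mul_comm, iterate_mul] using hx k.1 k.2.le
    obtain ⟨i, -, hi⟩ := Finset.mem_image.1 (hc j ⟨k.1 * T, hk⟩)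
    have hxi : f^[k.1 * T] x ∉ A i := by
      simpa [← hi] using mem_iInter.1 hj ⟨k.1 * T, hk⟩
    have hi' : i = !v k := Bool.eq_not.2 fun h => hxi (h ▸ hxk)
    exact ⟨hk, by rw [← hi, hi']⟩
  choose J hJ using forced
  have A_injective : Injective A := fun i j hij => by
    by_contra hne'
    obtain ⟨x, hx⟩ := hne i
    exact (hd i).notMem_of_mem_left hx (Bool.eq_not.2 (Ne.symm hne') ▸ hij ▸ hx)
  have J_injective : Injective J := fun v w hvw => funext fun k => by
    obtain ⟨_, hv⟩ := hJ v k
    obtain ⟨_, hw⟩ := hJ w k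
    rw [hvw, hw] at hv
    exact (Bool.not_inj (A_injective (compl_injective hv))).symm
  simpa using Fintype.card_le_of_injective J J_injective

lemma log_two_div_le_log_div {T n N : ℕ} (hT : 1 ≤ T) (hn : T ≤ n) (hN : 2 ^ (n / T) ≤ N) :
    Real.log 2 / (2 * T) ≤ Real.log N / n := by
  have hlog : (n / T : ℕ) * Real.log 2 ≤ Real.log N := by
    rw [← Real.log_pow]
    exact Real.log_le_log (by positivity) (mod_cast hN)
  have hdiv : (n : ℝ) ≤ (n / T : ℕ) * (2 * T) := by
    have := Nat.mod_lt n hT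
    have := Nat.div_add_mod n T
    have := Nat.div_pos hn hT
    exact_mod_cast (by nlinarith : n ≤ n / T * (2 * T))
  have := Real.log_pos one_lt_two
  rw [div_le_div_iff₀ (by positivity) (mod_cast hT.trans hn)]
  calc Real.log 2 * n ≤ Real.log 2 * ((n / T : ℕ) * (2 * T)) := by gcongr
    _ = (n / T : ℕ) * Real.log 2 * (2 * T) := by ring
    _ ≤ Real.log N * (2 * T) := by gcongr

lemma ofReal_le_topEntropy [TopologicalSpace X] {f : X → X} {𝒰 : Finset (Set X)}
    (h𝒰 : IsOpenCoverOn univ 𝒰) {c : ℝ}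
    (hc : ∀ᶠ n : ℕ in atTop, c ≤ Real.log (seqCoverCountOn f univ id 𝒰 n) / n) :
    ENNReal.ofReal c ≤ topEntropy f :=
  le_iSup₂_of_le (f := fun 𝒰 (_ : IsOpenCoverOn univ 𝒰) => limsup
    (fun n : ℕ => ENNReal.ofReal (Real.log (seqCoverCountOn f univ id 𝒰 n) / n)) atTop) 𝒰 h𝒰 <|
    le_limsup_of_frequently_le (hc.mono fun _ h => ENNReal.ofReal_le_ofReal h).frequently

theorem HasHorseshoe.topEntropy_ne_zero [TopologicalSpace X] {f : X → X} (h : HasHorseshoe f) :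
    topEntropy f ≠ 0 := by
  classical
  obtain ⟨Q, B, hQ, hB, neQ, neB, hd, m, n, hm, hn, covQ, covB⟩ := h
  let A : Bool → Set X := fun i => cond i Q B
  have hT : 1 ≤ m * n := Nat.mul_pos hm hn
  have hcov : ∀ i j, A j ⊆ f^[m * n] '' A i := by
    have hQ' := subset_image_iterate_mul subset_union_left covQ hn
    have hB' := subset_image_iterate_mul subset_union_right covB hm
    rw [union_subset_iff] at hQ' hB'
    rw [mul_comm n m] at hB'
    simpa [A] using ⟨hB'.symm, hQ'.symm⟩
  have hd' : ∀ i, Disjoint (A i) (A !i) := by simpa [A] using ⟨hd.symm, hd⟩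
  have hU : IsOpenCoverOn univ (Finset.univ.image fun i => (A i)ᶜ) := by
    refine ⟨by simpa [A] using ⟨hQ, hB⟩, fun x _ => ?_⟩
    by_cases hx : x ∈ Q
    · exact ⟨Bᶜ, by simp [A], hd.notMem_of_mem_left hx⟩
    · exact ⟨Qᶜ, by simp [A], hx⟩
  have hpos : 0 < Real.log 2 / (2 * (m * n : ℕ)) :=
    div_pos (Real.log_pos one_lt_two) (by positivity)
  refine (lt_of_lt_of_le (ENNReal.ofReal_pos.2 hpos) (ofReal_le_topEntropy hU ?_)).ne'
  filter_upwards [eventually_ge_atTop (m * n)] with k hk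
  refine log_two_div_le_log_div hT hk (two_pow_le_seqCoverCountOn hT ?_ hd' hcov k)
  simpa [A] using ⟨neB, neQ⟩

end Horseshoe

section Arcs

variable {X : Type*}

/-- The concatenation of two curves at the parameter `t`. -/
noncomputable def curveConcat (α β : ℝ → X) (t : ℝ) : ℝ → X :=
  fun u => if u ≤ t then α u else β u

lemma curveConcat_of_le {α β : ℝ → X} {t u : ℝ} (h : u ≤ t) : curveConcat α β t u = α u :=
  if_pos h

lemma curveConcat_of_ge {α β : ℝ → X} {t u : ℝ} (hαβ : α t = β t) (h : t ≤ u) :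
    curveConcat α β t u = β u := by
  rcases h.eq_or_lt with rfl | h
  · rw [curveConcat_of_le le_rfl, hαβ]
  · exact if_neg h.not_ge

lemma injOn_curveConcat {α β : ℝ → X} {t : ℝ} {s : Set ℝ} (hα : InjOn α (s ∩ Iic t))
    (hβ : InjOn β (s ∩ Ioi t)) (hne : ∀ u ∈ s ∩ Iic t, ∀ v ∈ s ∩ Ioi t, α u ≠ β v) :
    InjOn (curveConcat α β t) s := by
  intro u hu v hv huv
  rcases le_or_gt u t with hut | hut <;> rcases le_or_gt v t with hvt | hvt <;>
    simp only [curveConcat, hut, hvt, not_le_of_gt, if_true, if_false] at huv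
  · exact hα ⟨hu, hut⟩ ⟨hv, hvt⟩ huv
  · exact absurd huv (hne u ⟨hu, hut⟩ v ⟨hv, hvt⟩)
  · exact absurd huv.symm (hne v ⟨hv, hvt⟩ u ⟨hu, hut⟩)
  · exact hβ ⟨hu, hut⟩ ⟨hv, hvt⟩ huv

variable [TopologicalSpace X]

/-- `γ` restricted to `[a, c]` parametrizes an arc; the degenerate case `a = c` is allowed. -/
structure IsArcParam (γ : ℝ → X) (a c : ℝ) : Prop where
  le : a ≤ c
  continuousOn : ContinuousOn γ (Icc a c)
  injOn : InjOn γ (Icc a c)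

/-- `p` and `q` are joined by a possibly degenerate arc inside `Z`. This is the injective version
of Mathlib's `JoinedIn`. -/
def ArcJoinedIn (Z : Set X) (p q : X) : Prop :=
  ∃ (γ : ℝ → X) (a c : ℝ), IsArcParam γ a c ∧ γ a = p ∧ γ c = q ∧ MapsTo γ (Icc a c) Z

namespace IsArcParam

variable {γ : ℝ → X} {a c : ℝ}

lemma mono (h : IsArcParam γ a c) {a' c' : ℝ} (ha : a ≤ a') (hle : a' ≤ c') (hc : c' ≤ c) :
    IsArcParam γ a' c' :=
  ⟨hle, h.continuousOn.mono (Icc_subset_Icc ha hc), h.injOn.mono (Icc_subset_Icc ha hc)⟩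

lemma comp_neg (h : IsArcParam γ a c) : IsArcParam (fun t => γ (-t)) (-c) (-a) := by
  have hm : MapsTo (fun t : ℝ => -t) (Icc (-c) (-a)) (Icc a c) :=
    fun t ht => ⟨le_neg_of_le_neg ht.2, neg_le.1 ht.1⟩
  exact ⟨neg_le_neg h.le, h.continuousOn.comp continuous_neg.continuousOn hm,
    h.injOn.comp neg_injective.injOn hm⟩

lemma comp_sub (h : IsArcParam γ a c) (r : ℝ) :
    IsArcParam (fun t => γ (t - r)) (a + r) (c + r) := by
  have hm : MapsTo (fun t : ℝ => t - r) (Icc (a + r) (c + r)) (Icc a c) :=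
    fun t ht => ⟨le_sub_iff_add_le.2 ht.1, sub_le_iff_le_add.2 ht.2⟩
  exact ⟨by gcongr; exact h.le, h.continuousOn.comp (by fun_prop) hm,
    h.injOn.comp sub_left_injective.injOn hm⟩

lemma isPreconnected_image (h : IsArcParam γ a c) : IsPreconnected (γ '' Icc a c) :=
  isPreconnected_Icc.image _ h.continuousOn

lemma isCompact_image (h : IsArcParam γ a c) : IsCompact (γ '' Icc a c) :=
  isCompact_Icc.image_of_continuousOn h.continuousOn

lemma left_mem_image (h : IsArcParam γ a c) : γ a ∈ γ '' Icc a c :=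
  mem_image_of_mem γ (left_mem_Icc.2 h.le)

lemma right_mem_image (h : IsArcParam γ a c) : γ c ∈ γ '' Icc a c :=
  mem_image_of_mem γ (right_mem_Icc.2 h.le)

lemma isCompact_inter_preimage (h : IsArcParam γ a c) {K : Set X} (hK : IsClosed K) :
    IsCompact (Icc a c ∩ γ ⁻¹' K) :=
  isCompact_Icc.of_isClosed_subset (h.continuousOn.preimage_isClosed_of_isClosed isClosed_Icc hK)
    inter_subset_left

lemma exists_first_hit (h : IsArcParam γ a c) {K : Set X} (hK : IsClosed K) (hc : γ c ∈ K) :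
    ∃ t ∈ Icc a c, γ t ∈ K ∧ ∀ s ∈ Icc a t, γ s ∈ K → s = t := by
  obtain ⟨t, ⟨ht, htK⟩, hmin⟩ :=
    (h.isCompact_inter_preimage hK).exists_isLeast ⟨c, right_mem_Icc.2 h.le, hc⟩
  exact ⟨t, ht, htK, fun s hs hsK => hs.2.antisymm (hmin ⟨⟨hs.1, hs.2.trans ht.2⟩, hsK⟩)⟩

lemma exists_last_hit (h : IsArcParam γ a c) {K : Set X} (hK : IsClosed K) (ha : γ a ∈ K) :
    ∃ t ∈ Icc a c, γ t ∈ K ∧ ∀ s ∈ Icc t c, γ s ∈ K → s = t := by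
  obtain ⟨t, ⟨ht, htK⟩, hmax⟩ :=
    (h.isCompact_inter_preimage hK).exists_isGreatest ⟨a, left_mem_Icc.2 h.le, ha⟩
  exact ⟨t, ht, htK, fun s hs hsK => (hmax ⟨⟨ht.1.trans hs.1, hs.2⟩, hsK⟩).antisymm hs.1⟩

end IsArcParam

lemma continuousOn_curveConcat {α β : ℝ → X} {a t d : ℝ} (hα : IsArcParam α a t)
    (hβ : IsArcParam β t d) (hαβ : α t = β t) : ContinuousOn (curveConcat α β t) (Icc a d) := by
  rw [← Icc_union_Icc_eq_Icc hα.le hβ.le]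
  exact (hα.continuousOn.congr fun u hu => curveConcat_of_le hu.2).union_of_isClosed
    (hβ.continuousOn.congr fun u hu => curveConcat_of_ge hαβ hu.1) isClosed_Icc isClosed_Icc

namespace ArcJoinedIn

variable {Z W : Set X} {p q : X}

lemma symm (h : ArcJoinedIn Z p q) : ArcJoinedIn Z q p := by
  obtain ⟨γ, a, c, hγ, rfl, rfl, hZ⟩ := h
  exact ⟨_, -c, -a, hγ.comp_neg, by simp, by simp,
    fun t ht => hZ ⟨le_neg_of_le_neg ht.2, neg_le.1 ht.1⟩⟩

lemma mono (h : ArcJoinedIn Z p q) (hZW : Z ⊆ W) : ArcJoinedIn W p q := by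
  obtain ⟨γ, a, c, hγ, hp, hq, hZ⟩ := h
  exact ⟨γ, a, c, hγ, hp, hq, hZ.mono_right hZW⟩

lemma exists_param_from (h : ArcJoinedIn Z p q) (b : ℝ) :
    ∃ (γ : ℝ → X) (d : ℝ), IsArcParam γ b d ∧ γ b = p ∧ γ d = q ∧ MapsTo γ (Icc b d) Z := by
  obtain ⟨γ, a, c, hγ, rfl, rfl, hZ⟩ := h
  refine ⟨_, c + (b - a), by simpa using hγ.comp_sub (b - a), by simp, by simp, fun t ht => hZ ?_⟩
  exact ⟨by linarith [ht.1], by linarith [ht.2]⟩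

end ArcJoinedIn

lemma IsArcParam.arcJoinedIn_image {γ : ℝ → X} {a c : ℝ} (h : IsArcParam γ a c) {u v : ℝ}
    (hu : u ∈ Icc a c) (hv : v ∈ Icc a c) : ArcJoinedIn (γ '' uIcc u v) (γ u) (γ v) := by
  wlog huv : u ≤ v generalizing u v
  · exact uIcc_comm u v ▸ (this hv hu (le_of_not_ge huv)).symm
  rw [uIcc_of_le huv]
  exact ⟨γ, u, v, h.mono hu.1 huv hv.2, rfl, rfl, mapsTo_image _ _⟩

lemma ArcJoinedIn.trans [T2Space X] {Z : Set X} {p q r : X} (h : ArcJoinedIn Z p q)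
    (h' : ArcJoinedIn Z q r) : ArcJoinedIn Z p r := by
  obtain ⟨α, a, c, hα, rfl, rfl, hαZ⟩ := h
  obtain ⟨β, b, d, hβ, hb, rfl, hβZ⟩ := h'
  obtain ⟨t, ht, ⟨u, hu, hut⟩, hfirst⟩ :=
    hα.exists_first_hit hβ.isCompact_image.isClosed (hb ▸ hβ.left_mem_image)
  have hud : uIcc u d ⊆ Icc b d := uIcc_subset_Icc hu (right_mem_Icc.2 hβ.le)
  obtain ⟨δ, e, hδ, hδt, hδe, hδβ⟩ :=
    (hβ.arcJoinedIn_image hu (right_mem_Icc.2 hβ.le)).exists_param_from t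
  have hα' : IsArcParam α a t := hα.mono le_rfl ht.1 ht.2
  have hαδ : α t = δ t := by rw [hδt, hut]
  refine ⟨curveConcat α δ t, a, e,
    ⟨ht.1.trans hδ.le, continuousOn_curveConcat hα' hδ hαδ, injOn_curveConcat ?_ ?_ ?_⟩,
    curveConcat_of_le ht.1, by rw [curveConcat_of_ge hαδ hδ.le, hδe], fun s hs => ?_⟩
  · exact hα'.injOn.mono fun s hs => (⟨hs.1.1, hs.2⟩ : s ∈ Icc a t)
  · exact hδ.injOn.mono fun s hs => (⟨hs.2.le, hs.1.2⟩ : s ∈ Icc t e)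
  · intro s hs v hv hsv
    have hv' : v ∈ Icc t e := ⟨hv.2.le, hv.1.2⟩
    obtain rfl := hfirst s ⟨hs.1.1, hs.2⟩ (hsv ▸ image_mono hud (hδβ hv'))
    exact hv.2.ne (hδ.injOn (left_mem_Icc.2 hδ.le) hv' (hαδ ▸ hsv))
  · rcases le_total s t with hst | hst
    · exact curveConcat_of_le (β := δ) hst ▸ hαZ ⟨hs.1, hst.trans ht.2⟩
    · obtain ⟨v, hv, hvs⟩ := hδβ ⟨hst, hs.2⟩
      rw [curveConcat_of_ge hαδ hst, ← hvs]
      exact hβZ (hud hv)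

lemma isSimpleClosedCurve_range_liftIco [T2Space X] {δ : ℝ → X} {a p : ℝ} [Fact (0 < p)]
    (hδ : ContinuousOn δ (Icc a (a + p))) (hinj : InjOn δ (Ico a (a + p)))
    (hend : δ a = δ (a + p)) : IsSimpleClosedCurve (range (AddCircle.liftIco p a δ)) := by
  have hcont : Continuous (AddCircle.liftIco p a δ) := AddCircle.liftIco_continuous hend hδ
  have hlift : Injective (AddCircle.liftIco p a δ) := fun x y hxy => by
    obtain ⟨s, hs, rfl⟩ := (AddCircle.coe_image_Ico_eq p a).ge (mem_univ x)
    obtain ⟨t, ht, rfl⟩ := (AddCircle.coe_image_Ico_eq p a).ge (mem_univ y)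
    erw [AddCircle.liftIco_coe_apply hs, AddCircle.liftIco_coe_apply ht] at hxy
    rw [hinj hs ht hxy]
  have hp : p ≠ 0 := (Fact.out (p := 0 < p)).ne'
  exact ⟨(hcont.isClosedEmbedding hlift).isEmbedding.toHomeomorph.symm.trans
    (AddCircle.homeomorphCircle hp)⟩

lemma exists_isSimpleClosedCurve_of_two_arcs [T2Space X] {α : ℝ → X} {a t : ℝ} {Z : Set X}
    (hα : IsArcParam α a t) (hat : a < t) (hZ : ArcJoinedIn Z (α t) (α a))
    (hend : ∀ s ∈ Icc a t, α s ∈ Z → s = a ∨ s = t) : ∃ S : Set X, IsSimpleClosedCurve S := by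
  obtain ⟨β, d, hβ, hβt, hβd, hβZ⟩ := hZ.exists_param_from t
  have : Fact (0 < d - a) := ⟨sub_pos.2 (hat.trans_le hβ.le)⟩
  have had : a + (d - a) = d := by ring
  refine ⟨_, isSimpleClosedCurve_range_liftIco (p := d - a) (a := a) (δ := curveConcat α β t)
    ?_ ?_ ?_⟩ <;> rw [had]
  · exact continuousOn_curveConcat hα hβ hβt.symm
  · refine injOn_curveConcat
      (hα.injOn.mono fun s hs => (⟨hs.1.1, hs.2⟩ : s ∈ Icc a t))
      (hβ.injOn.mono fun s hs => (⟨hs.2.le, hs.1.2.le⟩ : s ∈ Icc t d)) fun s hs v hv hsv => ?_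
    have hvd : v ∈ Icc t d := ⟨hv.2.le, hv.1.2.le⟩
    rcases hend s ⟨hs.1.1, hs.2⟩ (hsv ▸ hβZ hvd) with rfl | rfl
    · exact hv.1.2.ne (hβ.injOn hvd (right_mem_Icc.2 hβ.le) (by rw [← hsv, hβd]))
    · exact hv.2.ne (hβ.injOn (left_mem_Icc.2 hβ.le) hvd (by rw [← hsv, hβt]))
  · rw [curveConcat_of_le hat.le, curveConcat_of_ge hβt.symm hβ.le, hβd]

/-- Uniqueness of arcs: a second arc missing the intermediate point `γ t` would close up to a simple
closed curve with the part of the first arc around `γ t` which it does not meet. -/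
lemma IsArcParam.not_arcJoinedIn_compl_singleton [T2Space X]
    (hX : ∀ S : Set X, ¬ IsSimpleClosedCurve S) {γ : ℝ → X} {a c t : ℝ} (h : IsArcParam γ a c)
    (ht : t ∈ Icc a c) : ¬ ArcJoinedIn {γ t}ᶜ (γ a) (γ c) := by
  rintro ⟨β, b, d, hβ, hb, hd, hβt⟩
  have hclosed := hβ.isCompact_image.isClosed
  obtain ⟨u, hu, ⟨u', hu', hβu⟩, hlast⟩ :=
    (h.mono le_rfl ht.1 ht.2).exists_last_hit hclosed (hb ▸ hβ.left_mem_image)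
  obtain ⟨v, hv, ⟨v', hv', hβv⟩, hfirst⟩ :=
    (h.mono ht.1 ht.2 le_rfl).exists_first_hit hclosed (hd ▸ hβ.right_mem_image)
  have hut : u < t := hu.2.lt_of_ne fun e => hβt hu' (e ▸ hβu)
  have htv : t < v := hv.1.lt_of_ne fun e => hβt hv' (e ▸ hβv)
  have hβuv := (hβ.arcJoinedIn_image hv' hu').mono (image_mono (uIcc_subset_Icc hv' hu'))
  rw [hβu, hβv] at hβuv
  obtain ⟨S, hS⟩ := exists_isSimpleClosedCurve_of_two_arcs
    (h.mono hu.1 (hut.trans htv).le hv.2) (hut.trans htv) hβuv fun s hs hsβ =>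
      (le_total s t).imp (fun hst => hlast s ⟨hs.1, hst⟩ hsβ) fun hts => hfirst s ⟨hts, hs.2⟩ hsβ
  exact hX S hS

lemma IsArc.exists_isArcParam {A : Set X} (hA : IsArc A) :
    ∃ φ : ℝ → X, IsArcParam φ 0 1 ∧ φ '' Icc 0 1 = A := by
  obtain ⟨e⟩ := hA
  refine ⟨fun t => e.symm (projIcc 0 1 zero_le_one t), ⟨zero_le_one, ?_, ?_⟩, ?_⟩
  · exact (continuous_subtype_val.comp (e.symm.continuous.comp continuous_projIcc)).continuousOn
  · intro s hs t ht hst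
    have := e.symm.injective (Subtype.val_injective hst)
    simpa [projIcc_of_mem zero_le_one hs, projIcc_of_mem zero_le_one ht] using this
  · ext x
    refine ⟨?_, fun hx => ⟨e ⟨x, hx⟩, (e ⟨x, hx⟩).2, by simp⟩⟩
    rintro ⟨t, -, rfl⟩
    exact Subtype.coe_prop _

lemma IsArc.isCompact {A : Set X} (hA : IsArc A) : IsCompact A := by
  obtain ⟨φ, hφ, rfl⟩ := hA.exists_isArcParam
  exact hφ.isCompact_image

lemma IsArc.isConnected {A : Set X} (hA : IsArc A) : IsConnected A := by
  obtain ⟨φ, hφ, rfl⟩ := hA.exists_isArcParam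
  exact ⟨⟨_, hφ.left_mem_image⟩, hφ.isPreconnected_image⟩

lemma IsArc.eventually_arcJoinedIn [T2Space X] {A Z : Set X} (hA : IsArc A) (hZ : IsOpen Z)
    {p : X} (hp : p ∈ Z) : ∀ᶠ q in 𝓝 p, q ∈ A → ArcJoinedIn Z p q := by
  by_cases hpA : p ∈ A
  swap
  · filter_upwards [hA.isCompact.isClosed.isOpen_compl.mem_nhds hpA] with q hq hqA
    exact absurd hqA hq
  obtain ⟨φ, hφ, rfl⟩ := hA.exists_isArcParam
  obtain ⟨u, hu, rfl⟩ := hpA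
  obtain ⟨ε, hε, hball⟩ :=
    Metric.mem_nhdsWithin_iff.1 (hφ.continuousOn u hu (hZ.mem_nhds hp))
  have hfar : IsClosed (φ '' (Icc 0 1 \ Metric.ball u ε)) :=
    ((isCompact_Icc.diff Metric.isOpen_ball).image_of_continuousOn
      (hφ.continuousOn.mono sdiff_subset)).isClosed
  have hu_far : φ u ∉ φ '' (Icc 0 1 \ Metric.ball u ε) := fun ⟨v, hv, hvu⟩ =>
    hv.2 (hφ.injOn hv.1 hu hvu ▸ Metric.mem_ball_self hε)
  filter_upwards [hfar.isOpen_compl.mem_nhds hu_far]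
  rintro _ hv_far ⟨v, hv, rfl⟩
  have hvε : v ∈ Metric.ball u ε := by_contra fun h => hv_far ⟨v, ⟨hv, h⟩, rfl⟩
  refine (hφ.arcJoinedIn_image hu hv).mono (image_subset_iff.2 fun w hw => hball
    ⟨(convex_ball u ε).ordConnected.uIcc_subset (Metric.mem_ball_self hε) hvε hw,
      uIcc_subset_Icc hu hv hw⟩)

end Arcs

section Segments

variable {X : Type*} [TopologicalSpace X] {K : Set X} {b c p q v z : X}

/-- The segment between `p` and `q`: the smallest connected set containing both, which in a tree is
the unique arc joining them. -/
def seg (p q : X) : Set X :=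
  ⋂₀ {C | IsPreconnected C ∧ p ∈ C ∧ q ∈ C}

/-- `b` is the gate of `K` towards `z`: the only point of `K` on the segment from `b` to `z`. -/
def IsGate (K : Set X) (b z : X) : Prop :=
  b ∈ K ∧ ∀ w ∈ seg b z, w ∈ K → w = b

/-- `c` and `v` lie in the same branch at `K`, that is, in the same component of the complement. -/
def SameBranch (K : Set X) (c v : X) : Prop :=
  Disjoint (seg c v) K

lemma seg_subset {C : Set X} (hC : IsPreconnected C) (hp : p ∈ C) (hq : q ∈ C) : seg p q ⊆ C :=
  sInter_subset_of_mem ⟨hC, hp, hq⟩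

lemma left_mem_seg (p q : X) : p ∈ seg p q := fun _ h => h.2.1

lemma right_mem_seg (p q : X) : q ∈ seg p q := fun _ h => h.2.2

lemma seg_comm (p q : X) : seg p q = seg q p := by
  simp only [seg, and_comm]

lemma seg_self (p : X) : seg p p = {p} :=
  (seg_subset isPreconnected_singleton rfl rfl).antisymm (singleton_subset_iff.2 (left_mem_seg p p))

lemma IsGate.notMem (h : IsGate K b z) (hv : v ∈ seg b z) (hvb : v ≠ b) : v ∉ K :=
  fun hK => hvb (h.2 v hv hK)

lemma SameBranch.refl (hc : c ∉ K) : SameBranch K c c := by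
  rw [SameBranch, seg_self]
  exact disjoint_singleton_left.2 hc

lemma SameBranch.anti (h : SameBranch K' c v) (hK : K ⊆ K') : SameBranch K c v :=
  Disjoint.mono_right hK h

lemma SameBranch.symm (h : SameBranch K c v) : SameBranch K v c := by
  rwa [SameBranch, seg_comm]

lemma SameBranch.notMem_right (h : SameBranch K c v) : v ∉ K :=
  h.notMem_of_mem_left (right_mem_seg c v)

end Segments

namespace IsTree

variable {X : Type*} [MetricSpace X]

lemma eventually_arcJoinedIn (hX : IsTree X) {Z : Set X} (hZ : IsOpen Z) {p : X} (hp : p ∈ Z) :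
    ∀ᶠ q in 𝓝 p, ArcJoinedIn Z p q := by
  obtain ⟨𝒜, hArc, hcov, -⟩ := hX.2.2.1
  filter_upwards [(Filter.eventually_all_finset 𝒜).2 fun A hA =>
    (hArc A hA).eventually_arcJoinedIn hZ hp] with q hq
  obtain ⟨A, hA, hqA⟩ := hcov.ge (mem_univ q)
  exact hq A hA hqA

lemma arcJoinedIn (hX : IsTree X) {R Z : Set X} (hZ : IsOpen Z) (hR : IsPreconnected R)
    (hRZ : R ⊆ Z) {p q : X} (hp : p ∈ R) (hq : q ∈ R) : ArcJoinedIn Z p q :=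
  hR.induction₂ _ (fun _ hx => mem_nhdsWithin_of_mem_nhds (hX.eventually_arcJoinedIn hZ (hRZ hx)))
    (fun _ _ _ _ _ _ => ArcJoinedIn.trans) (fun _ _ _ _ => ArcJoinedIn.symm) hp hq

lemma image_eq_seg (hX : IsTree X) {γ : ℝ → X} {a c : ℝ} (hγ : IsArcParam γ a c) :
    γ '' Icc a c = seg (γ a) (γ c) := by
  refine Subset.antisymm ?_
    (seg_subset hγ.isPreconnected_image hγ.left_mem_image hγ.right_mem_image)
  rintro _ ⟨t, ht, rfl⟩ C ⟨hC, ha, hc⟩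
  by_contra hn
  exact hγ.not_arcJoinedIn_compl_singleton hX.2.2.2 ht
    (hX.arcJoinedIn isOpen_compl_singleton hC (subset_compl_singleton_iff.2 hn) ha hc)

lemma seg_subset_of_arcJoinedIn (hX : IsTree X) {Z : Set X} {p q : X} (h : ArcJoinedIn Z p q) :
    seg p q ⊆ Z := by
  obtain ⟨γ, a, c, hγ, rfl, rfl, hZ⟩ := h
  exact hX.image_eq_seg hγ ▸ image_subset_iff.2 hZ

lemma exists_isArcParam (hX : IsTree X) (p q : X) :
    ∃ (γ : ℝ → X) (a c : ℝ), IsArcParam γ a c ∧ γ a = p ∧ γ c = q := by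
  have := hX.2.1
  obtain ⟨γ, a, c, hγ, ha, hc, -⟩ :=
    hX.arcJoinedIn isOpen_univ isPreconnected_univ subset_rfl (mem_univ p) (mem_univ q)
  exact ⟨γ, a, c, hγ, ha, hc⟩

lemma isPreconnected_seg (hX : IsTree X) (p q : X) : IsPreconnected (seg p q) := by
  obtain ⟨γ, a, c, hγ, rfl, rfl⟩ := hX.exists_isArcParam p q
  exact hX.image_eq_seg hγ ▸ hγ.isPreconnected_image

lemma isClosed_seg (hX : IsTree X) (p q : X) : IsClosed (seg p q) := by
  obtain ⟨γ, a, c, hγ, rfl, rfl⟩ := hX.exists_isArcParam p q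
  exact hX.image_eq_seg hγ ▸ hγ.isCompact_image.isClosed

lemma eventually_seg_subset (hX : IsTree X) {p : X} {U : Set X} (hU : U ∈ 𝓝 p) :
    ∀ᶠ q in 𝓝 p, seg p q ⊆ U := by
  obtain ⟨Z, hZU, hZ, hp⟩ := mem_nhds_iff.1 hU
  filter_upwards [hX.eventually_arcJoinedIn hZ hp] with q hq
  exact (hX.seg_subset_of_arcJoinedIn hq).trans hZU

lemma seg_antisymm (hX : IsTree X) {k x y : X} (hx : x ∈ seg k y) (hy : y ∈ seg k x) : x = y := by
  obtain ⟨γ, a, c, hγ, rfl, rfl⟩ := hX.exists_isArcParam k y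
  obtain ⟨t, ht, rfl⟩ := hX.image_eq_seg hγ ▸ hx
  obtain ⟨s, hs, hsc⟩ := hX.image_eq_seg (hγ.mono le_rfl ht.1 ht.2) ▸ hy
  rw [hγ.injOn ⟨hs.1, hs.2.trans ht.2⟩ (right_mem_Icc.2 hγ.le) hsc] at hs
  rw [ht.2.antisymm hs.2]

lemma seg_antisymm_right (hX : IsTree X) {k x y : X} (hx : x ∈ seg y k) (hy : y ∈ seg x k) :
    x = y :=
  hX.seg_antisymm (seg_comm y k ▸ hx) (seg_comm x k ▸ hy)

lemma seg_subset_union (hX : IsTree X) (p q r : X) : seg p r ⊆ seg p q ∪ seg q r :=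
  seg_subset ((hX.isPreconnected_seg p q).union q (right_mem_seg p q) (left_mem_seg q r)
    (hX.isPreconnected_seg q r)) (.inl (left_mem_seg p q)) (.inr (right_mem_seg q r))

lemma seg_subset_left (hX : IsTree X) {p q x : X} (hx : x ∈ seg p q) : seg p x ⊆ seg p q :=
  seg_subset (hX.isPreconnected_seg p q) (left_mem_seg p q) hx

lemma seg_subset_right (hX : IsTree X) {p q x : X} (hx : x ∈ seg p q) : seg x q ⊆ seg p q :=
  seg_subset (hX.isPreconnected_seg p q) hx (right_mem_seg p q)

lemma mem_seg_of_mem_left (hX : IsTree X) {p q x v : X} (hx : x ∈ seg p q) (hv : v ∈ seg p x) :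
    x ∈ seg v q :=
  (hX.seg_subset_union p v q hx).elim (fun h => hX.seg_antisymm hv h ▸ left_mem_seg v q) id

lemma eq_of_mem_seg_of_mem_seg (hX : IsTree X) {p q x v : X} (hx : x ∈ seg p q)
    (hl : v ∈ seg p x) (hr : v ∈ seg x q) : v = x :=
  hX.seg_antisymm_right hr (hX.mem_seg_of_mem_left hx hl)

lemma mem_seg_or_mem_seg (hX : IsTree X) {p q x y : X} (hx : x ∈ seg p q) (hy : y ∈ seg p q) :
    x ∈ seg p y ∨ y ∈ seg p x := by
  rcases hX.seg_subset_union p x q hy with h | hxy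
  · exact .inr h
  · rcases hX.seg_subset_union p y q hx with h | hyx
    · exact .inl h
    · exact .inl (hX.seg_antisymm_right hxy hyx ▸ right_mem_seg p y)

lemma isPreconnected_of_seg_subset (hX : IsTree X) {S : Set X} {p : X}
    (h : ∀ q ∈ S, seg p q ⊆ S) : IsPreconnected S :=
  isPreconnected_of_forall p fun q hq =>
    ⟨seg p q, h q hq, left_mem_seg p q, right_mem_seg p q, hX.isPreconnected_seg p q⟩

lemma mem_of_mem_seg_of_notMem_seg (hX : IsTree X) {R : Set X} (hR : IsPreconnected R)
    {b v z z' : X} (hz : z ∈ R) (hz' : z' ∈ R) (h : v ∈ seg b z) (h' : v ∉ seg b z') : v ∈ R :=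
  seg_subset hR hz' hz ((hX.seg_subset_union b z' z h).resolve_left h')

lemma exists_mem_seg_near (hX : IsTree X) {b w : X} (h : b ≠ w) {U : Set X} (hU : U ∈ 𝓝 b) :
    ∃ x ∈ seg b w, x ≠ b ∧ x ≠ w ∧ seg b x ⊆ U := by
  have hacc := (hX.isPreconnected_seg b w).preperfect_of_nontrivial
    ⟨b, left_mem_seg b w, w, right_mem_seg b w, h⟩ b (left_mem_seg b w)
  obtain ⟨x, ⟨⟨hxU, hxw⟩, hx⟩, hxb⟩ := accPt_iff_nhds.1 hacc _
    (inter_mem (hX.eventually_seg_subset hU) (compl_singleton_mem_nhds h))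
  exact ⟨x, hx, hxb, hxw, hxU⟩

lemma eventually_notMem_seg (hX : IsTree X) {v z : X} (h : v ≠ z) : ∀ᶠ w in 𝓝 z, v ∉ seg z w := by
  filter_upwards [hX.eventually_seg_subset (compl_singleton_mem_nhds h.symm)] with w hw hv
  exact hw hv rfl

lemma isOpen_setOf_notMem_seg (hX : IsTree X) (b v : X) : IsOpen {z | v ∉ seg b z} := by
  refine isOpen_iff_eventually.2 fun z hz => ?_
  have hvz : v ≠ z := fun h => hz (h ▸ right_mem_seg b v)
  filter_upwards [hX.eventually_notMem_seg hvz] with w hw hv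
  exact (hX.seg_subset_union b z w hv).elim hz hw

lemma isOpen_setOf_mem_seg_ne (hX : IsTree X) (b v : X) : IsOpen {z | v ∈ seg b z ∧ v ≠ z} := by
  refine isOpen_iff_eventually.2 fun z hz => ?_
  filter_upwards [hX.eventually_notMem_seg hz.2] with w hw
  refine ⟨(hX.seg_subset_union b w z hz.1).resolve_right (seg_comm z w ▸ hw), ?_⟩
  rintro rfl
  exact hw (right_mem_seg z v)

lemma mem_of_mem_seg_closure (hX : IsTree X) {R : Set X} (hR : IsPreconnected R) {k p v : X}
    (hk : k ∈ R) (hp : p ∈ closure R) (hv : v ∈ seg k p) (hvp : v ≠ p) : v ∈ R := by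
  obtain ⟨r, hr, hrR⟩ := mem_closure_iff.1 hp _ (hX.isOpen_setOf_mem_seg_ne k v) ⟨hv, hvp⟩
  exact seg_subset hR hk hrR hr.1

lemma exists_isGate (hX : IsTree X) {K : Set X} (hK : IsClosed K) (hne : K.Nonempty) (z : X) :
    ∃ b, IsGate K b z := by
  obtain ⟨k, hk⟩ := hne
  obtain ⟨γ, a, c, hγ, rfl, rfl⟩ := hX.exists_isArcParam z k
  obtain ⟨t, ht, htK, hfirst⟩ := hγ.exists_first_hit hK hk
  refine ⟨γ t, htK, fun w hw hwK => ?_⟩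
  rw [seg_comm, ← hX.image_eq_seg (hγ.mono le_rfl ht.1 ht.2)] at hw
  obtain ⟨s, hs, rfl⟩ := hw
  rw [hfirst s hs hwK]

end IsTree

section Gates

variable {X : Type*} [MetricSpace X] {K : Set X} {b b' c k v w z : X}

lemma IsGate.mem_seg (hX : IsTree X) (h : IsGate K b z) (hK : IsPreconnected K) (hk : k ∈ K) :
    b ∈ seg k z := by
  rcases eq_or_ne b z with rfl | hbz
  · exact right_mem_seg k b
  refine (hX.isClosed_seg k z).closure_subset (mem_closure_iff_nhds.2 fun U hU => ?_)
  obtain ⟨x, hx, hxb, -, hxU⟩ := hX.exists_mem_seg_near hbz hU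
  refine ⟨x, hxU (right_mem_seg b x), (hX.seg_subset_union b k z hx).resolve_left fun hxk => ?_⟩
  exact h.notMem hx hxb (seg_subset hK h.1 hk hxk)

lemma IsGate.eq (hX : IsTree X) (h : IsGate K b z) (h' : IsGate K b' z) (hK : IsPreconnected K) :
    b = b' :=
  h'.2 b (h.mem_seg hX hK h'.1) h.1

lemma IsGate.of_mem_seg (hX : IsTree X) (h : IsGate K b z) (hv : v ∈ seg b z) : IsGate K b v :=
  ⟨h.1, fun w hw => h.2 w (hX.seg_subset_left hv hw)⟩

lemma IsGate.of_sameBranch (hX : IsTree X) (h : IsGate K b z) (hzv : SameBranch K z v) :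
    IsGate K b v :=
  ⟨h.1, fun w hw hwK =>
    h.2 w ((hX.seg_subset_union b z v hw).resolve_right (hzv.notMem_of_mem_right hwK)) hwK⟩

lemma IsGate.sameBranch (hX : IsTree X) (h : IsGate K b z) (hv : v ∈ seg b z) (hvb : v ≠ b) :
    SameBranch K v z := by
  refine Set.disjoint_left.2 fun w hw hwK => hvb ?_
  obtain rfl := h.2 w (hX.seg_subset_right hv hw) hwK
  exact hX.seg_antisymm_right hv hw

lemma SameBranch.trans (hX : IsTree X) (h : SameBranch K c v) (h' : SameBranch K v w) :
    SameBranch K c w :=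
  (disjoint_union_left.2 ⟨h, h'⟩).mono_left (hX.seg_subset_union c v w)

lemma isOpen_setOf_sameBranch (hX : IsTree X) (hK : IsClosed K) (c : X) :
    IsOpen {v | SameBranch K c v} := by
  refine isOpen_iff_eventually.2 fun v hv => ?_
  filter_upwards [hX.eventually_seg_subset (hK.isOpen_compl.mem_nhds hv.notMem_right)] with w hw
  exact hv.trans hX (disjoint_left.2 hw)

lemma notMem_seg_of_mem_seg (hX : IsTree X) (hK : IsPreconnected K) {k' : X} (hv : v ∉ K)
    (hk : k ∈ K) (hk' : k' ∈ K) (h : k' ∈ seg v w) : v ∉ seg k w := fun hvw => by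
  rcases hX.seg_subset_union k k' w hvw with hvk | hvk
  · exact hv (seg_subset hK hk hk' hvk)
  · exact hv (hX.seg_antisymm_right h hvk ▸ hk')

end Gates

section Antichains

variable {X : Type*} [MetricSpace X]

lemma not_isAntichain_seg_of_three_le_card (hX : IsTree X) {A : Set X} (hA : IsArc A)
    {S : Finset X} (hSA : (S : Set X) ⊆ A) (hS : 3 ≤ S.card) (k : X) :
    ¬ IsAntichain (· ∈ seg k ·) (S : Set X) := by
  classical
  intro hanti
  obtain ⟨φ, hφ, rfl⟩ := hA.exists_isArcParam
  obtain ⟨T, hT, hinj, rfl⟩ := Finset.exists_subset_injOn_image_eq_of_surjOn _ _ hSA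
  rw [Finset.card_image_of_injOn hinj] at hS
  let t : Fin T.card → ℝ := T.orderEmbOfFin rfl
  have ht : ∀ i, t i ∈ T := T.orderEmbOfFin_mem rfl
  have hmem : ∀ i, φ (t i) ∈ (T.image φ : Finset X) := fun i => Finset.mem_image_of_mem φ (ht i)
  have hne : ∀ i j, i < j → φ (t i) ≠ φ (t j) := fun i j hij h =>
    ((T.orderEmbOfFin rfl).strictMono hij).ne (hinj (ht i) (ht j) h)
  let u : Fin T.card := ⟨0, by lia⟩
  let v : Fin T.card := ⟨1, by lia⟩
  let w : Fin T.card := ⟨2, by lia⟩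
  have huv : u < v := Fin.mk_lt_mk.2 one_pos
  have hvw : v < w := Fin.mk_lt_mk.2 one_lt_two
  have huw : t u ≤ t w := (T.orderEmbOfFin rfl).monotone (huv.trans hvw).le
  have hv : φ (t v) ∈ seg (φ (t u)) (φ (t w)) :=
    hX.image_eq_seg (hφ.mono (hT (ht u)).1 huw (hT (ht w)).2) ▸
      mem_image_of_mem φ ⟨(T.orderEmbOfFin rfl).monotone huv.le,
        (T.orderEmbOfFin rfl).monotone hvw.le⟩
  rcases hX.seg_subset_union _ k _ hv with h | h
  · rw [seg_comm] at h
    exact hanti (hmem v) (hmem u) (hne u v huv).symm h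
  · exact hanti (hmem v) (hmem w) (hne v w hvw) h

lemma IsTree.exists_card_le (hX : IsTree X) : ∃ N : ℕ, ∀ (S : Finset X) (k : X),
    IsAntichain (· ∈ seg k ·) (S : Set X) → S.card ≤ N := by
  classical
  obtain ⟨𝒜, hArc, hcov, -⟩ := hX.2.2.1
  refine ⟨𝒜.card * 2, fun S k hS => not_lt.1 fun hlt => ?_⟩
  have hex : ∀ s : X, ∃ A ∈ 𝒜, s ∈ A := fun s => hcov.ge (mem_univ s)
  choose F hF hsF using hex
  obtain ⟨A, hA, hcard⟩ := Finset.exists_lt_card_fiber_of_mul_lt_card_of_maps_to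
    (fun s _ => hF s) hlt
  refine not_isAntichain_seg_of_three_le_card hX (hArc A hA) (fun s hs => ?_) hcard k
    (hS.subset (Finset.coe_subset.2 (Finset.filter_subset _ S)))
  exact (Finset.mem_filter.1 hs).2 ▸ hsF s

lemma IsTree.exists_frequently_mem_seg (hX : IsTree X) {x : ℕ → X} {b : X}
    (hx : Tendsto x atTop (𝓝 b)) (hne : ∀ j, x j ≠ b) :
    ∃ i, ∃ᶠ j in atTop, x j ∈ seg b (x i) := by
  by_contra! hcon
  obtain ⟨N, hN⟩ := hX.exists_card_le
  let r : ℕ → ℕ → Prop := fun i j => x i ∉ seg b (x j) ∧ x j ∉ seg b (x i)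
  have : Std.Symm r := ⟨fun _ _ h => h.symm⟩
  obtain ⟨f, -, hf⟩ := exists_seq_of_forall_finset_exists' (fun _ => True) r fun s _ =>
    (((Filter.eventually_all_finset s).2 fun i _ =>
      (hx.eventually (hX.eventually_notMem_seg (hne i))).and
        (hcon i)).exists).imp fun _ h => ⟨trivial, h⟩
  have hinj : Injective (x ∘ f) := fun m n hmn => by_contra fun h =>
    (hf h).1 ((show x (f m) = x (f n) from hmn) ▸ right_mem_seg _ _)
  refine (hN ((Finset.range (N + 1)).map ⟨x ∘ f, hinj⟩) b ?_).not_gt (by simp)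
  rintro _ hs _ hs' hne
  obtain ⟨m, -, rfl⟩ := Finset.mem_map.1 (Finset.mem_coe.1 hs)
  obtain ⟨n, -, rfl⟩ := Finset.mem_map.1 (Finset.mem_coe.1 hs')
  exact (hf fun h => hne (congrArg (x ∘ f) h)).1

end Antichains

section InvariantContinua

variable {X : Type*} [TopologicalSpace X] {g : X → X} {K : Set X}

/-- `K` is a subcontinuum (of a compact space) mapped into itself by `g`. -/
structure InvContinuum (g : X → X) (K : Set X) : Prop where
  isClosed : IsClosed K
  isConnected : IsConnected K
  mapsTo : MapsTo g K K

lemma InvContinuum.isPreconnected (hK : InvContinuum g K) : IsPreconnected K :=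
  hK.isConnected.isPreconnected

end InvariantContinua

section TreeHorseshoe

variable {X : Type*} [MetricSpace X] {g h : X → X} {K : Set X} {a b x x' : X}

lemma exists_subset_image_iterate_seg (hX : IsTree X) (hh : Continuous h) (hx : x ∈ seg b (h x))
    (hex : ∃ i, x ∉ seg b (h^[i] (h x))) : ∃ m, 1 ≤ m ∧ seg x (h x) ⊆ h^[m] '' seg x (h x) := by
  classical
  let i := Nat.find hex
  have hi : x ∉ seg b (h^[i] (h x)) := Nat.find_spec hex
  have hi0 : i ≠ 0 := fun h0 => by simp only [h0, iterate_zero, id] at hi; exact hi hx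
  obtain ⟨j, hj⟩ := Nat.exists_eq_succ_of_ne_zero hi0
  have hmin : x ∈ seg b (h^[i] x) := by
    rw [hj]
    exact not_not.1 (Nat.find_min hex (show j < i by lia))
  have hpre (n : ℕ) : IsPreconnected (h^[n] '' seg x (h x)) :=
    (hX.isPreconnected_seg _ _).image _ (hh.iterate n).continuousOn
  have hleft (n : ℕ) : h^[n] x ∈ h^[n] '' seg x (h x) := mem_image_of_mem _ (left_mem_seg _ _)
  obtain ⟨q, hq, hqx⟩ : x ∈ h^[i] '' seg x (h x) :=
    hX.mem_of_mem_seg_of_notMem_seg (hpre i) (hleft i)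
      (mem_image_of_mem _ (right_mem_seg _ _)) hmin hi
  have hhx : h x ∈ h^[i + 1] '' seg x (h x) :=
    ⟨q, hq, (iterate_succ_apply' h i q).trans (congrArg h hqx)⟩
  exact ⟨i + 1, by lia, seg_subset (hpre _)
    (hX.mem_of_mem_seg_of_notMem_seg (hpre _) hhx (hleft _) hx hi) hhx⟩

lemma exists_subset_image_seg (hX : IsTree X) (hh : Continuous h) (hx : x ∈ seg b (h x'))
    (hb : x ∉ seg b (h b)) (hx'b : x' ≠ b) :
    ∃ y ∈ seg b x', y ≠ b ∧ seg x (h x') ⊆ h '' seg y x' := by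
  obtain ⟨y, hy, hyb, -, hysub⟩ := hX.exists_mem_seg_near hx'b.symm
    (hh.continuousAt.preimage_mem_nhds ((hX.isOpen_setOf_notMem_seg b x).mem_nhds hb))
  have hpre := (hX.isPreconnected_seg y x').image h hh.continuousOn
  have hhx' : h x' ∈ h '' seg y x' := mem_image_of_mem h (right_mem_seg _ _)
  exact ⟨y, hy, hyb, seg_subset hpre (hX.mem_of_mem_seg_of_notMem_seg hpre hhx'
    (mem_image_of_mem h (left_mem_seg _ _)) hx (hysub (right_mem_seg b y))) hhx'⟩

lemma IsGate.subset_setOf_notMem_seg (hb : IsGate K b a) (hK : IsPreconnected K)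
    (hx : x ∈ seg b a) (hxb : x ≠ b) : K ⊆ {z | x ∉ seg b z} :=
  fun _ hz h => hb.notMem hx hxb (seg_subset hK hb.1 hz h)

theorem InvContinuum.hasHorseshoe (hX : IsTree X) (hg : Continuous g) {P P' : ℕ}
    (hK : InvContinuum g K) (hb : IsGate K b a) (hl : Tendsto (g^[·] a) atTop (𝓝ˢ K))
    (hx : x ∈ seg b a) (hxa : x ≠ a) (hxb : x ≠ b) (hx' : x' ∈ seg b x) (hxx' : x' ≠ x)
    (hxb' : x' ≠ b) (hP : g^[P] x = a) (hP' : g^[P'] x' = a) : HasHorseshoe g := by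
  have hP0 : 1 ≤ P := Nat.one_le_iff_ne_zero.2 (by rintro rfl; exact hxa hP)
  have hescape {v : X} (hv : v ∈ seg b a) (hvb : v ≠ b) {m : ℕ} (hm : 1 ≤ m) :
      ∃ k, v ∉ seg b (g^[m * (k + 1)] a) :=
    (((tendsto_add_atTop_nat 1).const_mul_atTop' hm).eventually (hl.eventually
      ((hX.isOpen_setOf_notMem_seg b v).mem_nhdsSet.2
        (hb.subset_setOf_notMem_seg hK.isPreconnected hv hvb)))).exists
  obtain ⟨m, hm, hcov⟩ : ∃ m, 1 ≤ m ∧ seg x a ⊆ g^[m] '' seg x a := by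
    obtain ⟨k, hk⟩ := hescape hx hxb hP0
    obtain ⟨m, hm, hcov⟩ := exists_subset_image_iterate_seg hX (hg.iterate P) (hP.symm ▸ hx)
      ⟨k + 1, by rwa [hP, ← iterate_mul]⟩
    rw [hP, ← iterate_mul] at hcov
    exact ⟨P * m, Nat.mul_pos hP0 hm, hcov⟩
  obtain ⟨y, hy, hyb, hB⟩ : ∃ y ∈ seg b x', y ≠ b ∧ seg x a ⊆ g^[P'] '' seg y x' :=
    hP' ▸ exists_subset_image_seg hX (hg.iterate P') (hP'.symm ▸ hx)
      (hb.subset_setOf_notMem_seg hK.isPreconnected hx hxb (hK.mapsTo.iterate P' hb.1)) hxb'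
  have hyx : y ∈ seg b x := hX.seg_subset_left hx' hy
  obtain ⟨k, hk⟩ := hescape (hX.seg_subset_left hx hyx) hyb hm
  have hQ : seg x a ⊆ g^[m * (k + 1)] '' seg x a :=
    subset_image_iterate_mul Subset.rfl hcov (by lia)
  have hQB : seg x a ∪ seg y x' ⊆ g^[m * (k + 1)] '' seg x a := by
    have hpre := (hX.isPreconnected_seg x a).image _ (hg.iterate (m * (k + 1))).continuousOn
    have hxQ := hQ (left_mem_seg x a)
    have hyQ := hX.mem_of_mem_seg_of_notMem_seg hpre hxQ
      (mem_image_of_mem _ (right_mem_seg x a)) hyx hk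
    exact union_subset hQ ((hX.seg_subset_left (hX.mem_seg_of_mem_left hx' hy)).trans
      (seg_subset hpre hyQ hxQ))
  refine ⟨seg x a, seg y x', hX.isClosed_seg _ _, hX.isClosed_seg _ _, ⟨x, left_mem_seg _ _⟩,
    ⟨y, left_mem_seg _ _⟩, disjoint_left.2 fun w hwQ hwB => ?_, m * (k + 1), m * (k + 1) + P',
    by nlinarith, by nlinarith, hQB, ?_⟩
  · have hwx' : w ∈ seg b x' := hX.seg_subset_right hy hwB
    obtain rfl := hX.eq_of_mem_seg_of_mem_seg hx (hX.seg_subset_left hx' hwx') hwQ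
    exact hxx' (hX.seg_antisymm hx' hwx')
  · rw [iterate_add, image_comp]
    exact hQB.trans (image_mono hB)

end TreeHorseshoe

section OrbitClosure

variable {X : Type*} {g : X → X} {K T T' Y : Set X} {z : X}

/-- The union of the forward iterates of the set `T`. -/
def forwardOrbit (g : X → X) (T : Set X) : Set X :=
  ⋃ n : ℕ, g^[n] '' T

lemma mem_forwardOrbit : z ∈ forwardOrbit g T ↔ ∃ n, ∃ t ∈ T, g^[n] t = z := by
  simp only [forwardOrbit, mem_iUnion, mem_image]

lemma iterate_mem_forwardOrbit {t : X} (ht : t ∈ T) (n : ℕ) : g^[n] t ∈ forwardOrbit g T :=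
  mem_forwardOrbit.2 ⟨n, t, ht, rfl⟩

lemma subset_forwardOrbit : T ⊆ forwardOrbit g T :=
  fun _ ht => iterate_mem_forwardOrbit ht 0

lemma mapsTo_forwardOrbit : MapsTo g (forwardOrbit g T) (forwardOrbit g T) := fun z hz => by
  obtain ⟨n, t, ht, rfl⟩ := mem_forwardOrbit.1 hz
  exact iterate_succ_apply' g n t ▸ iterate_mem_forwardOrbit ht (n + 1)

lemma forwardOrbit_mono (h : T ⊆ T') : forwardOrbit g T ⊆ forwardOrbit g T' :=
  iUnion_mono fun _ => image_mono h

variable [TopologicalSpace X]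

/-- The closure of the forward orbit of `T`: the smallest closed forward-invariant set
containing `T`. -/
def orbitClosure (g : X → X) (T : Set X) : Set X :=
  closure (forwardOrbit g T)

lemma isClosed_orbitClosure : IsClosed (orbitClosure g T) := isClosed_closure

lemma forwardOrbit_subset_orbitClosure : forwardOrbit g T ⊆ orbitClosure g T := subset_closure

lemma subset_orbitClosure : T ⊆ orbitClosure g T :=
  subset_forwardOrbit.trans subset_closure

lemma orbitClosure_mono (h : T ⊆ T') : orbitClosure g T ⊆ orbitClosure g T' :=
  closure_mono (forwardOrbit_mono h)

namespace InvContinuum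

lemma orbitClosure_subset (hY : InvContinuum g Y) (h : T ⊆ Y) : orbitClosure g T ⊆ Y :=
  closure_minimal (iUnion_subset fun n => image_subset_iff.2 fun _ ht => hY.mapsTo.iterate n (h ht))
    hY.isClosed

lemma isPreconnected_forwardOrbit (hK : InvContinuum g K) (hg : Continuous g)
    (hT : IsPreconnected T) (hKT : K ⊆ T) : IsPreconnected (forwardOrbit g T) := by
  obtain ⟨k, hk⟩ := hK.isConnected.nonempty
  refine isPreconnected_of_forall k fun z hz => ?_
  obtain ⟨n, t, ht, rfl⟩ := mem_forwardOrbit.1 hz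
  exact ⟨T ∪ g^[n] '' T, union_subset subset_forwardOrbit (subset_iUnion (g^[·] '' T) n),
    .inl (hKT hk), .inr (mem_image_of_mem _ ht), hT.union (g^[n] k) (hKT (hK.mapsTo.iterate n hk))
      (mem_image_of_mem _ (hKT hk)) (hT.image _ (hg.iterate n).continuousOn)⟩

lemma invContinuum_orbitClosure (hK : InvContinuum g K) (hg : Continuous g) (hT : IsPreconnected T)
    (hKT : K ⊆ T) : InvContinuum g (orbitClosure g T) where
  isClosed := isClosed_orbitClosure
  isConnected := ⟨hK.isConnected.nonempty.mono (hKT.trans subset_orbitClosure),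
    (hK.isPreconnected_forwardOrbit hg hT hKT).closure⟩
  mapsTo := mapsTo_forwardOrbit.closure hg

lemma notMem_of_iterate_notMem (hK : InvContinuum g K) {n : ℕ} (h : g^[n] z ∉ K) : z ∉ K :=
  fun hz => h (hK.mapsTo.iterate n hz)

end InvContinuum

end OrbitClosure

section Compactness

lemma exists_pos_subset_of_biInter_subset {X : Type*} [TopologicalSpace X] [CompactSpace X]
    {V : ℝ → Set X} (hV : Monotone V) (hcl : ∀ r, IsClosed (V r)) {U : Set X} (hU : IsOpen U)
    (h : ⋂ r > 0, V r ⊆ U) : ∃ r > 0, V r ⊆ U := by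
  have : Nonempty (Ioi (0 : ℝ)) := ⟨⟨1, mem_Ioi.2 one_pos⟩⟩
  obtain ⟨r, hr⟩ := exists_subset_nhds_of_isCompact' (V := fun r : Ioi (0 : ℝ) => V r)
    (directed_of_isDirected_ge fun _ _ hij => hV hij) (fun r => (hcl r).isCompact)
    (fun r => hcl r) fun x hx => hU.mem_nhds (h (mem_iInter₂.2 fun r hr => mem_iInter.1 hx ⟨r, hr⟩))
  exact ⟨r, r.2, hr⟩

end Compactness

section Chains

variable {X : Type*} [PseudoMetricSpace X] {g : X → X} {H K K' Y Y' : Set X} {ε ε' : ℝ} {z : X}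

/-- `z` is the end of a finite `ε`-chain of `g` that starts in `K` and then stays in `Y`. -/
inductive ChainReachable (g : X → X) (Y K : Set X) (ε : ℝ) : X → Prop
  | base {k : X} : k ∈ K → ChainReachable g Y K ε k
  | step {p q : X} : ChainReachable g Y K ε p → q ∈ Y → dist (g p) q < ε → ChainReachable g Y K ε q

/-- Every point of `Y` can be reached from `K` by `ε`-chains inside `Y`, for all `ε > 0`. -/
def ChainSpans (g : X → X) (Y K : Set X) : Prop :=
  ∀ z ∈ Y, ∀ ε > 0, ChainReachable g Y K ε z

lemma ChainReachable.mono (h : ChainReachable g Y K ε z) (hY : Y ⊆ Y') (hK : K ⊆ K')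
    (hε : ε ≤ ε') : ChainReachable g Y' K' ε' z := by
  induction h with
  | base h => exact .base (hK h)
  | step _ hq hd ih => exact .step ih (hY hq) (hd.trans_le hε)

lemma ChainReachable.confine (h : ChainReachable g Y K ε z) :
    ChainReachable g {w | ChainReachable g Y K ε w} K ε z := by
  induction h with
  | base h => exact .base h
  | step hp hq hd ih => exact .step ih (ChainReachable.step hp hq hd) hd

lemma chainReachable_iterate (hY : MapsTo g Y Y) (hKY : K ⊆ Y) (hz : z ∈ K) (hε : 0 < ε) (n : ℕ) :
    ChainReachable g Y K ε (g^[n] z) := by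
  induction n with
  | zero => exact .base hz
  | succ n ih =>
    rw [iterate_succ_apply']
    exact .step ih (hY (hY.iterate n (hKY hz))) (by rwa [dist_self])

lemma ChainSpans.mono (h : ChainSpans g Y K) (hK : K ⊆ K') : ChainSpans g Y K' :=
  fun z hz ε hε => (h z hz ε hε).mono Subset.rfl hK le_rfl

lemma ChainSpans.mem_image (h : ChainSpans g H K) (hg : Continuous g) (hH : IsCompact H)
    [T2Space X] (hKH : K ⊆ H) (hz : z ∈ H) (hzK : z ∉ K) : z ∈ g '' H := by
  refine (hH.image hg).isClosed.closure_subset (Metric.mem_closure_iff.2 fun ε hε => ?_)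
  have hmem {p : X} (hp : ChainReachable g H K ε p) : p ∈ H := by
    cases hp with
    | base hk => exact hKH hk
    | step _ hq _ => exact hq
  cases h z hz ε hε with
  | base hk => exact absurd hk hzK
  | step hp _ hd => exact ⟨_, mem_image_of_mem g (hmem hp), by rwa [dist_comm]⟩

theorem chainSpans_of_forall_thickening (hg : UniformContinuous g) (hK : IsClosed K)
    (h : ∀ η > 0, ∀ z ∈ H,
      ChainReachable g (Metric.thickening η H) (Metric.thickening η K) η z) :
    ChainSpans g H K := fun z hz ε hε => by
  by_cases hzK : z ∈ K
  · exact .base hzK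
  obtain ⟨δ, hδ, hgδ⟩ := Metric.uniformContinuous_iff.1 hg (ε / 3) (by positivity)
  have hev : ∀ᶠ η in 𝓝[>] (0 : ℝ), z ∉ Metric.thickening η K :=
    (Metric.eventually_notMem_thickening_of_infEDist_pos
      (hK.closure_eq.symm ▸ hzK)).filter_mono nhdsWithin_le_nhds
  have hδε : 0 < min δ (ε / 3) := by positivity
  obtain ⟨η, hzη, hη, hηm⟩ := (hev.and (Ioo_mem_nhdsGT hδε)).exists
  obtain ⟨hηδ, hηε⟩ := lt_min_iff.1 hηm
  have hstep {w p q q' : X} (hwp : dist w p < η) (hq : dist (g w) q < η) (hqq : dist q q' < η) :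
      dist (g p) q' < ε := by
    have h1 := hgδ (hwp.trans hηδ)
    have h2 := dist_triangle4 (g p) (g w) q q'
    rw [dist_comm (g p) (g w)] at h2
    linarith
  have hnear (w : X) (hw : ChainReachable g (Metric.thickening η H) (Metric.thickening η K) η w) :
      ∃ p, dist w p < η ∧ ChainReachable g H K ε p := by
    induction hw with
    | base hk =>
      obtain ⟨k, hk, hd⟩ := Metric.mem_thickening_iff.1 hk
      exact ⟨k, hd, .base hk⟩
    | step _ hq hd ih =>
      obtain ⟨p, hp, hpr⟩ := ih
      obtain ⟨q, hqH, hqd⟩ := Metric.mem_thickening_iff.1 hq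
      exact ⟨q, hqd, .step hpr hqH (hstep hp hd hqd)⟩
  cases h η hη z hz with
  | base hk => exact absurd hk hzη
  | step hp _ hd =>
    obtain ⟨p, hpd, hpr⟩ := hnear _ hp
    exact .step hpr hz (hstep hpd hd (by rwa [dist_self]))

end Chains

section LimitHull

variable {X : Type*} [MetricSpace X] {g : X → X} {K Y : Set X} {T : ℝ → Set X} {b d q x z : X}
  {r : ℝ}

/-- `T r`, for decreasing `r > 0`, is a monotone family of connected sets shrinking to `K`. -/
structure ShrinksTo (T : ℝ → Set X) (K : Set X) : Prop where
  monotone : Monotone T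
  isPreconnected : ∀ r > 0, IsPreconnected (T r)
  subset : ∀ r > 0, K ⊆ T r
  exists_subset_thickening : ∀ η > 0, ∃ r > 0, T r ⊆ Metric.thickening η K

/-- The set of points that can be reached from arbitrarily small members of the family `T`. -/
def limitHull (g : X → X) (T : ℝ → Set X) : Set X :=
  ⋂ r > 0, orbitClosure g (T r)

lemma limitHull_subset_orbitClosure (hr : 0 < r) : limitHull g T ⊆ orbitClosure g (T r) :=
  biInter_subset_of_mem hr

lemma InvContinuum.limitHull_subset (hY : InvContinuum g Y) (hTY : ∀ r, T r ⊆ Y) :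
    limitHull g T ⊆ Y :=
  (limitHull_subset_orbitClosure one_pos).trans (hY.orbitClosure_subset (hTY 1))

namespace ShrinksTo

lemma subset_limitHull (hT : ShrinksTo T K) : K ⊆ limitHull g T :=
  subset_iInter₂ fun r hr => (hT.subset r hr).trans subset_orbitClosure

lemma exists_orbitClosure_subset [CompactSpace X] (hT : ShrinksTo T K) {U : Set X} (hU : IsOpen U)
    (hHU : limitHull g T ⊆ U) : ∃ r > 0, orbitClosure g (T r) ⊆ U :=
  exists_pos_subset_of_biInter_subset (fun _ _ h => orbitClosure_mono (hT.monotone h))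
    (fun _ => isClosed_orbitClosure) hU hHU

lemma isPreconnected_forwardOrbit (hT : ShrinksTo T K) (hg : Continuous g) (hK : InvContinuum g K)
    (hr : 0 < r) : IsPreconnected (forwardOrbit g (T r)) :=
  hK.isPreconnected_forwardOrbit hg (hT.isPreconnected r hr) (hT.subset r hr)

lemma invContinuum_orbitClosure (hT : ShrinksTo T K) (hg : Continuous g) (hK : InvContinuum g K)
    (hr : 0 < r) : InvContinuum g (orbitClosure g (T r)) :=
  hK.invContinuum_orbitClosure hg (hT.isPreconnected r hr) (hT.subset r hr)

lemma invContinuum_limitHull (hT : ShrinksTo T K) (hX : IsTree X) (hg : Continuous g)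
    (hK : InvContinuum g K) : InvContinuum g (limitHull g T) where
  isClosed := isClosed_biInter fun _ _ => isClosed_orbitClosure
  isConnected := by
    obtain ⟨k, hk⟩ := hK.isConnected.nonempty
    have hkH := hT.subset_limitHull (g := g) hk
    refine ⟨⟨k, hkH⟩, hX.isPreconnected_of_seg_subset (p := k) fun z hz => ?_⟩
    exact subset_iInter₂ fun r hr =>
      seg_subset (hT.invContinuum_orbitClosure hg hK hr).isPreconnected
        (limitHull_subset_orbitClosure hr hkH) (limitHull_subset_orbitClosure hr hz)
  mapsTo _ hz := mem_iInter₂.2 fun _ hr =>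
    (hT.invContinuum_orbitClosure hg hK hr).mapsTo (limitHull_subset_orbitClosure hr hz)

lemma mem_forwardOrbit_of_mem_seg (hT : ShrinksTo T K) (hX : IsTree X) (hg : Continuous g)
    (hK : InvContinuum g K) (hr : 0 < r) (hb : b ∈ K) (hz : z ∈ orbitClosure g (T r))
    (hx : x ∈ seg b z) (hxz : x ≠ z) : x ∈ forwardOrbit g (T r) :=
  hX.mem_of_mem_seg_closure (hT.isPreconnected_forwardOrbit hg hK hr)
    (subset_forwardOrbit (hT.subset r hr hb)) hz hx hxz

lemma chainSpans_limitHull [CompactSpace X] (hT : ShrinksTo T K) (hg : Continuous g)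
    (hK : InvContinuum g K) : ChainSpans g (limitHull g T) K := by
  refine chainSpans_of_forall_thickening (CompactSpace.uniformContinuous_of_continuous hg)
    hK.isClosed fun η hη z hz => ?_
  obtain ⟨r₁, hr₁, h₁⟩ := hT.exists_orbitClosure_subset Metric.isOpen_thickening
    (Metric.self_subset_thickening hη (limitHull g T))
  obtain ⟨r₂, hr₂, h₂⟩ := hT.exists_subset_thickening (η / 2) (half_pos hη)
  let S := T (min r₁ r₂)
  have hreach {t : X} (ht : t ∈ S) (n : ℕ) :
      ChainReachable g (Metric.thickening η (limitHull g T)) (Metric.thickening η K) η (g^[n] t) :=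
    (chainReachable_iterate mapsTo_forwardOrbit subset_forwardOrbit ht hη n).mono
      (forwardOrbit_subset_orbitClosure.trans
        ((orbitClosure_mono (hT.monotone (min_le_left _ _))).trans h₁))
      ((hT.monotone (min_le_right _ _)).trans (h₂.trans (Metric.thickening_mono (by linarith) K)))
      le_rfl
  obtain ⟨_, hw, hzw⟩ := Metric.mem_closure_iff.1
    (limitHull_subset_orbitClosure (lt_min hr₁ hr₂) hz) _ (half_pos hη)
  obtain ⟨n, t, ht, rfl⟩ := mem_forwardOrbit.1 hw
  cases n with
  | zero =>
    obtain ⟨k, hk, htk⟩ := Metric.mem_thickening_iff.1 (h₂ (hT.monotone (min_le_right _ _) ht))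
    exact .base (Metric.mem_thickening_iff.2 ⟨k, hk, by
      linarith [dist_triangle z t k, show dist z t < η / 2 from hzw]⟩)
  | succ n =>
    rw [iterate_succ_apply', dist_comm] at hzw
    exact .step (hreach ht n) (Metric.self_subset_thickening hη _ hz) (by linarith)

end ShrinksTo

/-- The germ at `K` of the segment from `b` to `d`: the set `K` together with the initial piece
of radius `r` of that segment. -/
def germ (K : Set X) (b d : X) (r : ℝ) : Set X :=
  K ∪ {v | v ∈ seg b d ∧ seg b v ⊆ Metric.closedBall b r}

lemma germ_subset (hY : IsPreconnected Y) (hKY : K ⊆ Y) (hb : b ∈ K) (hd : d ∈ Y) :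
    germ K b d r ⊆ Y :=
  union_subset hKY fun _ hv => seg_subset hY (hKY hb) hd hv.1

lemma shrinksTo_germ (hX : IsTree X) (hK : IsPreconnected K) (hb : b ∈ K) :
    ShrinksTo (germ K b d) K where
  monotone _ _ hrs := union_subset_union_right _ fun _ hv =>
    ⟨hv.1, hv.2.trans (Metric.closedBall_subset_closedBall hrs)⟩
  isPreconnected r hr := by
    refine hK.union b hb ⟨left_mem_seg b d, ?_⟩ (hX.isPreconnected_of_seg_subset fun v hv w hw =>
      ⟨hX.seg_subset_left hv.1 hw, (hX.seg_subset_left hw).trans hv.2⟩)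
    exact seg_self b ▸ singleton_subset_iff.2 (Metric.mem_closedBall_self hr.le)
  subset _ _ := subset_union_left
  exists_subset_thickening η hη := by
    refine ⟨η / 2, half_pos hη, union_subset (Metric.self_subset_thickening hη K) fun v hv => ?_⟩
    have : dist v b ≤ η / 2 := hv.2 (right_mem_seg b v)
    exact Metric.mem_thickening_iff.2 ⟨b, hb, by linarith⟩

lemma mem_seg_of_mem_germ (hX : IsTree X) (hx : x ∈ germ K b d r) (hxK : x ∉ K) (hq : q ∈ seg b d)
    (hr : r < dist q b) : x ∈ seg b q ∧ x ≠ q := by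
  obtain ⟨hxd, hxr⟩ := hx.resolve_left hxK
  have hqx : q ∉ seg b x := fun h => hr.not_ge (hxr h)
  exact ⟨(hX.mem_seg_or_mem_seg hxd hq).resolve_right hqx,
    fun h => hqx (h ▸ right_mem_seg b x)⟩

end LimitHull

section Trapping

variable {X : Type*} [PseudoMetricSpace X] {g : X → X} {K Y : Set X} {u x : X} {θ : ℝ}

/-- Some iterate of `u` lies in the interior of `K` relative to `Y`. -/
def EntersInterior (g : X → X) (Y K : Set X) (u : X) : Prop :=
  ∃ m, K ∈ 𝓝[Y] (g^[m] u)

/-- The ends of the `ε`-chains with `i` steps that start in the `ε`-ball around `x`. -/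
def chainBall (g : X → X) (ε : ℝ) (x : X) (i : ℕ) : Set X :=
  (fun A => Metric.thickening ε (g '' A))^[i] (Metric.ball x ε)

lemma chainBall_succ (g : X → X) (ε : ℝ) (x : X) (i : ℕ) :
    chainBall g ε x (i + 1) = Metric.thickening ε (g '' chainBall g ε x i) :=
  iterate_succ_apply' _ _ _

lemma eventually_chainBall_subset_ball (hg : UniformContinuous g) (hθ : 0 < θ) (i : ℕ) :
    ∀ᶠ ε in 𝓝[>] 0, ∀ x, chainBall g ε x i ⊆ Metric.ball (g^[i] x) θ := by
  induction i generalizing θ with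
  | zero =>
    filter_upwards [Ioo_mem_nhdsGT hθ] with ε hε x using Metric.ball_subset_ball hε.2.le
  | succ i ih =>
    obtain ⟨δ, hδ, hgδ⟩ := Metric.uniformContinuous_iff.1 hg (θ / 2) (half_pos hθ)
    filter_upwards [ih hδ, Ioo_mem_nhdsGT (half_pos hθ)] with ε hi hε x q hq
    rw [chainBall_succ] at hq
    obtain ⟨_, ⟨p, hp, rfl⟩, hqp⟩ := Metric.mem_thickening_iff.1 hq
    rw [Metric.mem_ball, iterate_succ_apply']
    linarith [dist_triangle q (g p) (g (g^[i] x)), hgδ (hi x hp), hε.2]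

lemma exists_uniform_entrance (hg : Continuous g) (hK : IsCompact K)
    (h : ∀ x ∈ K, EntersInterior g Y K x) :
    ∃ m : ℕ, ∃ ρ > 0, ∀ x ∈ K, ∃ i ≤ m, Metric.ball (g^[i] x) ρ ∩ Y ⊆ K := by
  refine hK.induction_on (p := fun S => ∃ m : ℕ, ∃ ρ > 0, ∀ x ∈ S, ∃ i ≤ m,
    Metric.ball (g^[i] x) ρ ∩ Y ⊆ K) ⟨0, 1, one_pos, fun _ h => h.elim⟩ ?_ ?_ fun x hx => ?_
  · rintro S S' hS ⟨m, ρ, hρ, h⟩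
    exact ⟨m, ρ, hρ, fun x hx => h x (hS hx)⟩
  · rintro S S' ⟨m, ρ, hρ, h⟩ ⟨m', ρ', hρ', h'⟩
    refine ⟨max m m', min ρ ρ', lt_min hρ hρ', fun x hx => ?_⟩
    rcases hx with hx | hx
    · obtain ⟨i, hi, hiK⟩ := h x hx
      exact ⟨i, hi.trans (le_max_left _ _), (inter_subset_inter_left Y
        (Metric.ball_subset_ball (min_le_left _ _))).trans hiK⟩
    · obtain ⟨i, hi, hiK⟩ := h' x hx
      exact ⟨i, hi.trans (le_max_right _ _), (inter_subset_inter_left Y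
        (Metric.ball_subset_ball (min_le_right _ _))).trans hiK⟩
  · obtain ⟨i, hi⟩ := h x hx
    obtain ⟨ρ, hρ, hball⟩ := Metric.mem_nhdsWithin_iff.1 hi
    refine ⟨_, mem_nhdsWithin_of_mem_nhds ((hg.iterate i).continuousAt.preimage_mem_nhds
      (Metric.ball_mem_nhds _ (half_pos hρ))), i, ρ / 2, half_pos hρ, fun w hw => ⟨i, le_rfl, ?_⟩⟩
    refine (inter_subset_inter_left Y (Metric.ball_subset_ball' ?_)).trans hball
    linarith [Metric.mem_ball.1 hw]

/- An `ε`-chain leaving `K` shadows the orbit of its last point `x` in `K` until, at the latest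
when that orbit enters the relative interior of `K`, it is back in `K`. -/
lemma ChainReachable.exists_mem_chainBall {ε ρ : ℝ} {m : ℕ} {q : X} (hε : 0 < ε)
    (hK : MapsTo g K K) (hKY : K ⊆ Y)
    (hm : ∀ x ∈ K, ∃ i ≤ m, Metric.ball (g^[i] x) ρ ∩ Y ⊆ K)
    (hball : ∀ i ≤ m, ∀ x, chainBall g ε x i ⊆ Metric.ball (g^[i] x) ρ)
    (hq : ChainReachable g Y K ε q) : q ∈ Y ∧ ∃ x ∈ K, ∃ i ≤ m, q ∈ chainBall g ε x i := by
  choose! τ hτm hτ using hm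
  suffices h : q ∈ Y ∧ ∃ x ∈ K, ∃ i ≤ τ x, q ∈ chainBall g ε x i by
    obtain ⟨hqY, x, hx, i, hi, hqi⟩ := h
    exact ⟨hqY, x, hx, i, hi.trans (hτm x hx), hqi⟩
  induction hq with
  | base hk => exact ⟨hKY hk, _, hk, 0, Nat.zero_le _, Metric.mem_ball_self hε⟩
  | @step p q _ hq hd ih =>
    obtain ⟨hpY, x, hx, i, hi, hpi⟩ := ih
    refine ⟨hq, ?_⟩
    rcases hi.eq_or_lt with rfl | hlt
    · have hpK : p ∈ K := hτ x hx ⟨hball _ (hτm x hx) x hpi, hpY⟩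
      exact ⟨g p, hK hpK, 0, Nat.zero_le _, by rwa [dist_comm] at hd⟩
    · refine ⟨x, hx, i + 1, hlt, ?_⟩
      rw [chainBall_succ, Metric.mem_thickening_iff]
      exact ⟨g p, mem_image_of_mem g hpi, by rwa [dist_comm]⟩

theorem ChainSpans.subset_of_entersInterior [CompactSpace X] (h : ChainSpans g Y K)
    (hg : Continuous g) (hK : IsClosed K) (hgK : MapsTo g K K) (hKY : K ⊆ Y)
    (hent : ∀ x ∈ K, EntersInterior g Y K x) : Y ⊆ K := fun z hz => by
  by_contra hzK
  obtain ⟨r, hr, hrK⟩ := Metric.isOpen_iff.1 hK.isOpen_compl z hzK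
  obtain ⟨m, ρ, hρ, hm⟩ := exists_uniform_entrance hg hK.isCompact hent
  have hshadow : ∀ᶠ ε in 𝓝[>] 0, ∀ i ∈ Iic m, ∀ x,
      chainBall g ε x i ⊆ Metric.ball (g^[i] x) (min r ρ) :=
    (eventually_all_finite (finite_Iic m)).2 fun i _ => eventually_chainBall_subset_ball
      (CompactSpace.uniformContinuous_of_continuous hg) (lt_min hr hρ) i
  obtain ⟨ε, hball, hε⟩ := (hshadow.and self_mem_nhdsWithin).exists
  obtain ⟨-, x, hx, i, hi, hzi⟩ := (h z hz ε hε).exists_mem_chainBall hε hgK hKY hm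
    fun i hi x => (hball i hi x).trans (Metric.ball_subset_ball (min_le_right _ _))
  have hzx : dist z (g^[i] x) < r :=
    Metric.ball_subset_ball (min_le_left _ _) (hball i hi x hzi)
  exact hrK (Metric.mem_ball'.2 hzx) (hgK.iterate i hx)

end Trapping

section Attraction

variable {X : Type*} {g : X → X} {K : Set X} {x : X} {n : ℕ}

lemma tendsto_iterate_of_iterate {l : Filter X} (h : Tendsto (g^[·] (g^[n] x)) atTop l) :
    Tendsto (g^[·] x) atTop l :=
  (tendsto_add_atTop_iff_nat n).1 (h.congr fun i => (iterate_add_apply g i n x).symm)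

variable [TopologicalSpace X]

lemma tendsto_nhdsSet_of_iterate_mem (hK : MapsTo g K K) (h : g^[n] x ∈ K) :
    Tendsto (g^[·] x) atTop (𝓝ˢ K) :=
  tendsto_iterate_of_iterate (n := n) ((tendsto_principal.2 (Eventually.of_forall fun i =>
    hK.iterate i h)).mono_right principal_le_nhdsSet)

end Attraction

lemma EntersInterior.tendsto {X : Type*} [PseudoMetricSpace X] {g : X → X} {K Y : Set X} {x : X}
    (h : EntersInterior g Y K x) (hY : MapsTo g Y Y) (hK : MapsTo g K K) (hx : x ∈ Y) :
    Tendsto (g^[·] x) atTop (𝓝ˢ K) := by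
  obtain ⟨n, hn⟩ := h
  exact tendsto_nhdsSet_of_iterate_mem hK (mem_of_mem_nhdsWithin (hY.iterate n hx) hn)

section RelativeEnds

variable {X : Type*} [TopologicalSpace X] {K K' Y : Set X} {n : ℕ}

/-- `Y` has at most `n` ends relative to `K`: among any `n + 1` points of `Y \ K`, one lies on the
segment from a point of `K` to another one. -/
def RelEndsLE (Y K : Set X) (n : ℕ) : Prop :=
  ∀ S : Finset X, ↑S ⊆ Y \ K → (∀ k ∈ K, IsAntichain (· ∈ seg k ·) (S : Set X)) → S.card ≤ n

lemma RelEndsLE.mono (h : RelEndsLE Y K n) (hK : K ⊆ K') : RelEndsLE Y K' n :=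
  fun S hS hanti => h S (hS.trans (sdiff_subset_sdiff_right hK)) fun k hk => hanti k (hK hk)

end RelativeEnds

section GermRecurrence

variable {X : Type*} [MetricSpace X] {g : X → X} {H K Y : Set X} {b d p z : X} {n : ℕ}

lemma RelEndsLE.of_not_sameBranch (h : RelEndsLE Y K (n + 1)) (hX : IsTree X)
    (hK : IsPreconnected K) (hd : d ∈ Y \ K) (hHY : H ⊆ Y) (hH : ∀ p ∈ H, ¬SameBranch K d p) :
    RelEndsLE H K n := fun S hS hanti => by
  classical
  have hmeet (s : X) (hs : s ∈ S) : ∃ k ∈ seg d s, k ∈ K :=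
    not_disjoint_iff.1 (hH s (hS hs).1)
  have hdS : d ∉ S := fun hdS => hH d (hS hdS).1 (.refl hd.2)
  have hcard := h (insert d S) (by
    rw [Finset.coe_insert]
    exact insert_subset hd (hS.trans (sdiff_subset_sdiff_left hHY))) fun k hk => by
      rw [Finset.coe_insert]
      refine (hanti k hk).insert (fun s hs _ => ?_) fun s hs _ => ?_
      · obtain ⟨k', hk', hk'K⟩ := hmeet s hs
        exact notMem_seg_of_mem_seg hX hK (hS hs).2 hk hk'K (seg_comm d s ▸ hk')
      · obtain ⟨k', hk', hk'K⟩ := hmeet s hs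
        exact notMem_seg_of_mem_seg hX hK hd.2 hk hk'K hk'
  rw [Finset.card_insert_of_notMem hdS] at hcard
  exact Nat.le_of_succ_le_succ hcard

lemma IsGate.exists_mem_seg_inter (hX : IsTree X) (hb : IsGate K b d) (hdp : SameBranch K d p) :
    ∃ v ∈ seg b d ∩ seg b p, v ≠ b ∧ v ≠ p := by
  have hbn : b ∉ seg d p := fun h => hdp.notMem_of_mem_left h hb.1
  obtain ⟨m, hm⟩ := hX.exists_isGate (hX.isClosed_seg d p) ⟨d, left_mem_seg d p⟩ b
  have hmd : m ∈ seg b d := seg_comm d b ▸ hm.mem_seg hX (hX.isPreconnected_seg d p)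
    (left_mem_seg d p)
  have hmp : m ∈ seg b p := seg_comm p b ▸ hm.mem_seg hX (hX.isPreconnected_seg d p)
    (right_mem_seg d p)
  obtain ⟨v, hv, hvb, hvm, -⟩ := hX.exists_mem_seg_near (show b ≠ m by rintro rfl; exact hbn hm.1)
    univ_mem
  refine ⟨v, ⟨hX.seg_subset_left hmd hv, hX.seg_subset_left hmp hv⟩, hvb, ?_⟩
  rintro rfl
  exact hvm (hX.seg_antisymm hv hmp)

lemma exists_iterate_eq_of_mem_limitHull_germ (hX : IsTree X) (hg : Continuous g)
    (hK : InvContinuum g K) (hb : b ∈ K) (hp : p ∈ limitHull g (germ K b d)) {q : X}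
    (hqd : q ∈ seg b d) (hqp : q ∈ seg b p) (hqp' : q ≠ p) (hqK : q ∉ K) :
    ∃ x ∈ seg b q, x ≠ q ∧ x ∉ K ∧ ∃ P, g^[P] x = q := by
  have hqb : q ≠ b := fun h => hqK (h ▸ hb)
  obtain ⟨r, hr, hrq⟩ := exists_between (dist_pos.2 hqb)
  obtain ⟨P, x, hx, hxq⟩ := mem_forwardOrbit.1 <|
    (shrinksTo_germ (d := d) hX hK.isPreconnected hb).mem_forwardOrbit_of_mem_seg hX hg hK hr hb
      (limitHull_subset_orbitClosure hr hp) hqp hqp'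
  have hxK : x ∉ K := hK.notMem_of_iterate_notMem (hxq ▸ hqK)
  obtain ⟨hxs, hxne⟩ := mem_seg_of_mem_germ hX hx hxK hqd hrq
  exact ⟨x, hxs, hxne, hxK, P, hxq⟩

theorem hasHorseshoe_of_mem_limitHull_germ (hX : IsTree X) (hg : Continuous g)
    (hK : InvContinuum g K) (hb : IsGate K b d) (hp : p ∈ limitHull g (germ K b d))
    (hdp : SameBranch K d p)
    (hq : ∀ r > 0, ∃ q ∈ germ K b d r, q ∉ K ∧ Tendsto (g^[·] q) atTop (𝓝ˢ K)) :
    HasHorseshoe g := by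
  obtain ⟨v, ⟨hvd, hvp⟩, hvb, hvp'⟩ := hb.exists_mem_seg_inter hX hdp
  have hprev {w : X} (hw : w ∈ seg b v) (hwK : w ∉ K) :
      ∃ x ∈ seg b w, x ≠ w ∧ x ∉ K ∧ ∃ P, g^[P] x = w :=
    exists_iterate_eq_of_mem_limitHull_germ hX hg hK hb.1 hp (hX.seg_subset_left hvd hw)
      (hX.seg_subset_left hvp hw) (fun h => hvp' (hX.seg_antisymm hvp (h ▸ hw))) hwK
  have hne {w : X} (hw : w ∉ K) : w ≠ b := fun h => hw (h ▸ hb.1)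
  obtain ⟨r, hr, hrv⟩ := exists_between (dist_pos.2 hvb)
  obtain ⟨q, hqG, hqK, hql⟩ := hq r hr
  obtain ⟨hqv, -⟩ := mem_seg_of_mem_germ hX hqG hqK hvd hrv
  obtain ⟨x, hx, hxq, hxK, P, hP⟩ := hprev hqv hqK
  obtain ⟨x', hx', hxx', hxK', P', hP'⟩ := hprev (hX.seg_subset_left hqv hx) hxK
  exact hK.hasHorseshoe hX hg (P' := P + P') (hb.of_mem_seg hX (hX.seg_subset_left hvd hqv)) hql
    hx hxq (hne hxK) hx' hxx' (hne hxK') hP (by rw [iterate_add_apply, hP', hP])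

/-- No point outside an invariant continuum `K` converges to `K` inside an invariant continuum `Y`
that is chain-spanned by `K` and has at most `n` ends relative to `K`: the induction statement of
the main argument. -/
def NoAttraction (g : X → X) (n : ℕ) : Prop :=
  ∀ ⦃Y K : Set X⦄, InvContinuum g Y → InvContinuum g K → K ⊆ Y → ChainSpans g Y K →
    RelEndsLE Y K n → ∀ y ∈ Y, Tendsto (g^[·] y) atTop (𝓝ˢ K) → y ∈ K

theorem NoAttraction.mem_of_mem_limitHull_germ (hN : NoAttraction g n) (hX : IsTree X)
    (hg : Continuous g) (hns : ¬HasHorseshoe g) (hY : InvContinuum g Y) (hK : InvContinuum g K)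
    (hKY : K ⊆ Y) (hends : RelEndsLE Y K (n + 1)) (hd : d ∈ Y \ K) (hb : IsGate K b d)
    (hz : z ∈ limitHull g (germ K b d)) (hzK : Tendsto (g^[·] z) atTop (𝓝ˢ K))
    (hq : ∀ r > 0, ∃ q ∈ germ K b d r, q ∉ K ∧ Tendsto (g^[·] q) atTop (𝓝ˢ K)) : z ∈ K := by
  have := hX.1
  have hT : ShrinksTo (germ K b d) K := shrinksTo_germ hX hK.isPreconnected hb.1
  refine hN (hT.invContinuum_limitHull hX hg hK) hK hT.subset_limitHull
    (hT.chainSpans_limitHull hg hK) (hends.of_not_sameBranch hX hK.isPreconnected hd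
      (hY.limitHull_subset fun _ => germ_subset hY.isPreconnected hKY hb.1 hd.1) fun p hp hdp =>
      hns (hasHorseshoe_of_mem_limitHull_germ hX hg hK hb hp hdp hq)) z hz hzK

end GermRecurrence

section BackwardOrbits

variable {X : Type*} {g : X → X} {H M : Set X} {y : X}

lemma exists_injective_backward_orbit (hH : ∀ z ∈ H \ M, z ∈ g '' H) (hM : MapsTo g M M)
    (hy : y ∈ H \ M) (hper : y ∉ periodicPts g) :
    ∃ s : ℕ → X, Injective s ∧ (∀ i, s i ∈ H \ M) ∧ ∀ i, g^[i] (s i) = y := by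
  choose! pre hpreH hpre using hH
  have hmaps : MapsTo pre (H \ M) (H \ M) := fun z hz =>
    ⟨hpreH z hz, fun h => hz.2 (hpre z hz ▸ hM h)⟩
  have hs (i : ℕ) : g^[i] (pre^[i] y) = y := by
    induction i with
    | zero => rfl
    | succ i ih => rw [iterate_succ_apply, iterate_succ_apply', hpre _ (hmaps.iterate i hy), ih]
  refine ⟨(pre^[·] y), Injective.of_lt_imp_ne fun i k hik heq => hper ?_,
    fun i => hmaps.iterate i hy, hs⟩
  have hcycle : g^[k - i] y = y := calc
    g^[k - i] y = g^[k - i] (g^[i] (pre^[i] y)) := by rw [hs]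
    _ = g^[k] (pre^[k] y) := by
      rw [← iterate_add_apply, Nat.sub_add_cancel hik.le, show pre^[i] y = pre^[k] y from heq]
    _ = y := hs k
  exact mk_mem_periodicPts (Nat.sub_pos_of_lt hik) hcycle

lemma notMem_periodicPts_of_tendsto_nhdsSet [TopologicalSpace X] [RegularSpace X]
    (hM : IsClosed M) (hyM : y ∉ M) (hl : Tendsto (g^[·] y) atTop (𝓝ˢ M)) :
    y ∉ periodicPts g := fun ⟨p, hp, hper⟩ => by
  have hconst : Tendsto (fun i => g^[p * i] y) atTop (𝓝 y) :=
    tendsto_const_nhds.congr fun i => ((hper.mul_const i).eq).symm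
  exact hconst.not_tendsto (disjoint_nhds_nhdsSet.2 (hM.closure_eq.symm ▸ hyM))
    (hl.comp (tendsto_id.const_mul_atTop' hp))

end BackwardOrbits

section HullRecurrence

variable {X : Type*} [MetricSpace X] {g : X → X} {M Y : Set X} {T : ℝ → Set X} {y : X} {n : ℕ}

lemma ShrinksTo.mem_forwardOrbit (hT : ShrinksTo T M) (hX : IsTree X) (hg : Continuous g)
    (hM : InvContinuum g M) (hTY : limitHull g T ⊆ Y) (hends : RelEndsLE Y M n)
    (hy : y ∈ limitHull g T \ M) (hper : y ∉ periodicPts g) {r : ℝ} (hr : 0 < r) :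
    y ∈ forwardOrbit g (T r) := by
  classical
  have := hX.1
  have hH := hT.invContinuum_limitHull hX hg hM
  obtain ⟨s, hinj, hsH, hsy⟩ := exists_injective_backward_orbit (fun z hz =>
    (hT.chainSpans_limitHull hg hM).mem_image hg hH.isClosed.isCompact hT.subset_limitHull hz.1
      hz.2) hM.mapsTo hy hper
  by_contra hyR
  have hsR (i : ℕ) : s i ∉ forwardOrbit g (T r) := fun h =>
    hyR (hsy i ▸ mapsTo_forwardOrbit.iterate i h)
  have hcard := hends ((Finset.range (n + 1)).image s) (by
    rw [Finset.coe_image]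
    exact image_subset_iff.2 fun i _ => ⟨hTY (hsH i).1, (hsH i).2⟩)
    fun k hk a ha a' ha' hne hmem => by
      rw [Finset.coe_image] at ha ha'
      obtain ⟨i, -, rfl⟩ := ha
      obtain ⟨i', -, rfl⟩ := ha'
      exact hsR i (hT.mem_forwardOrbit_of_mem_seg hX hg hM hr hk
        (limitHull_subset_orbitClosure hr (hsH i').1) hmem hne)
  rw [Finset.card_image_of_injective _ hinj, Finset.card_range] at hcard
  exact hcard.not_gt n.lt_succ_self

lemma exists_isGate_forall_mem_germ (hX : IsTree X) (hM : IsClosed M) (hM' : IsPreconnected M)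
    {x : ℕ → X} (hx : Tendsto x atTop (𝓝ˢ M)) (hxM : ∀ j, x j ∉ M) :
    ∃ b i, IsGate M b (x i) ∧ ∀ r > 0, ∃ j, x j ∈ germ M b (x i) r := by
  have := hX.1
  obtain ⟨b, φ, hφ, hlim⟩ := CompactSpace.tendsto_subseq x
  have hbM : b ∈ M := by
    by_contra hbM
    exact hlim.not_tendsto (disjoint_nhds_nhdsSet.2 (hM.closure_eq.symm ▸ hbM))
      (hx.comp hφ.tendsto_atTop)
  obtain ⟨i, hi⟩ := hX.exists_frequently_mem_seg hlim fun j h =>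
    hxM (φ j) (mem_of_eq_of_mem h hbM)
  refine ⟨b, φ i, ⟨hbM, fun w hw hwM => ?_⟩, fun r hr => ?_⟩
  · by_contra hwb
    obtain ⟨j, hj, hjw⟩ := (hi.and_eventually
      (hlim.eventually (hX.eventually_notMem_seg hwb))).exists
    exact hxM _ (seg_subset hM' hbM hwM ((hX.mem_seg_or_mem_seg hj hw).resolve_right hjw))
  · obtain ⟨j, hj, hjr⟩ := (hi.and_eventually (hlim.eventually
      (hX.eventually_seg_subset (Metric.closedBall_mem_nhds b hr)))).exists
    exact ⟨φ j, .inr ⟨hj, hjr⟩⟩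

theorem NoAttraction.notMem_limitHull (hN : NoAttraction g n) (hX : IsTree X) (hg : Continuous g)
    (hns : ¬HasHorseshoe g) (hY : InvContinuum g Y) (hM : InvContinuum g M) (hMY : M ⊆ Y)
    (hends : RelEndsLE Y M (n + 1)) (hT : ShrinksTo T M) (hTY : ∀ r, T r ⊆ Y) (hyM : y ∉ M)
    (hl : Tendsto (g^[·] y) atTop (𝓝ˢ M)) : y ∉ limitHull g T := fun hy => by
  have := hX.1
  have hper := notMem_periodicPts_of_tendsto_nhdsSet hM.isClosed hyM hl
  have hsource (j : ℕ) : ∃ x ∈ T (1 / (j + 1)), ∃ k, g^[k] x = y := by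
    obtain ⟨k, x, hx, hk⟩ := mem_forwardOrbit.1 (hT.mem_forwardOrbit hX hg hM
      (hY.limitHull_subset hTY) hends ⟨hy, hyM⟩ hper (Nat.one_div_pos_of_nat (n := j)))
    exact ⟨x, hx, k, hk⟩
  choose x hxT k hk using hsource
  have hxM (j : ℕ) : x j ∉ M := hM.notMem_of_iterate_notMem (hk j ▸ hyM)
  have hx : Tendsto x atTop (𝓝ˢ M) := by
    refine (Metric.hasBasis_nhdsSet_thickening hM.isClosed.isCompact).tendsto_right_iff.2
      fun η hη => ?_
    obtain ⟨r, hr, hrη⟩ := hT.exists_subset_thickening η hη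
    filter_upwards [tendsto_one_div_add_atTop_nhds_zero_nat.eventually_lt_const hr] with j hj
    exact hrη (hT.monotone hj.le (hxT j))
  obtain ⟨b, i, hb, hgerm⟩ :=
    exists_isGate_forall_mem_germ hX hM.isClosed hM.isPreconnected hx hxM
  refine hyM (hN.mem_of_mem_limitHull_germ hX hg hns hY hM hMY hends ⟨hTY _ (hxT i), hxM i⟩ hb
    (mem_iInter₂.2 fun r hr => ?_) hl fun r hr => ?_)
  · obtain ⟨j, hj⟩ := hgerm r hr
    exact forwardOrbit_subset_orbitClosure (hk j ▸ iterate_mem_forwardOrbit hj (k j))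
  · obtain ⟨j, hj⟩ := hgerm r hr
    exact ⟨x j, hj, hxM j, tendsto_iterate_of_iterate (n := k j) (by simpa only [hk j] using hl)⟩

end HullRecurrence

section SegmentNeighbourhoods

variable {X : Type*} [MetricSpace X] {g : X → X} {K M Y : Set X} {y : X} {r : ℝ} {n : ℕ}

lemma IsTree.exists_forall_seg_subset_ball (hX : IsTree X) {ε : ℝ} (hε : 0 < ε) :
    ∃ δ > 0, ∀ p q : X, dist p q < δ → seg p q ⊆ Metric.ball p ε := by
  have := hX.1
  obtain ⟨δ, hδ, hball⟩ := lebesgue_number_lemma_of_metric (s := (univ : Set X)) isCompact_univ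
    (c := fun p => interior {q | seg p q ⊆ Metric.ball p (ε / 2)}) (fun _ => isOpen_interior)
    fun p _ => mem_iUnion.2 ⟨p, mem_interior_iff_mem_nhds.2
      (hX.eventually_seg_subset (Metric.ball_mem_nhds p (half_pos hε)))⟩
  refine ⟨δ, hδ, fun p q hpq => ?_⟩
  obtain ⟨c, hc⟩ := hball p (mem_univ p)
  have hp : seg c p ⊆ Metric.ball c (ε / 2) := interior_subset (hc (Metric.mem_ball_self hδ))
  have hq : seg c q ⊆ Metric.ball c (ε / 2) := interior_subset (hc (Metric.mem_ball'.2 hpq))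
  refine ((hX.seg_subset_union p c q).trans (union_subset (seg_comm p c ▸ hp) hq)).trans
    (Metric.ball_subset_ball' ?_)
  linarith [Metric.mem_ball'.1 (hp (right_mem_seg c p))]

/-- The union of the segments from `K` to the points of `Y` at distance less than `r`: a connected
neighbourhood of `K` in `Y`. -/
def segNhd (K Y : Set X) (r : ℝ) : Set X :=
  {z | ∃ m ∈ K, ∃ u ∈ Y, dist m u < r ∧ z ∈ seg m u}

lemma subset_segNhd (hKY : K ⊆ Y) (hr : 0 < r) : K ⊆ segNhd K Y r := fun k hk =>
  ⟨k, hk, k, hKY hk, by rwa [dist_self], left_mem_seg k k⟩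

lemma segNhd_subset (hY : IsPreconnected Y) (hKY : K ⊆ Y) : segNhd K Y r ⊆ Y := by
  rintro z ⟨m, hm, u, hu, -, hz⟩
  exact seg_subset hY (hKY hm) hu hz

lemma shrinksTo_segNhd (hX : IsTree X) (hK : IsConnected K) (hKY : K ⊆ Y) :
    ShrinksTo (segNhd K Y) K where
  monotone := fun _ _ hrs _ ⟨m, hm, u, hu, hd, hz⟩ => ⟨m, hm, u, hu, hd.trans_le hrs, hz⟩
  isPreconnected r hr := by
    obtain ⟨k, hk⟩ := hK.nonempty
    refine isPreconnected_of_forall k fun z ⟨m, hm, u, hu, hd, hz⟩ => ⟨K ∪ seg m u,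
      union_subset (subset_segNhd hKY hr) fun w hw => ⟨m, hm, u, hu, hd, hw⟩, .inl hk, .inr hz,
      hK.isPreconnected.union m hm (left_mem_seg m u) (hX.isPreconnected_seg m u)⟩
  subset r hr := subset_segNhd hKY hr
  exists_subset_thickening η hη := by
    obtain ⟨δ, hδ, hseg⟩ := hX.exists_forall_seg_subset_ball hη
    refine ⟨δ, hδ, fun z ⟨m, hm, u, _, hd, hz⟩ => ?_⟩
    exact Metric.mem_thickening_iff.2 ⟨m, hm, hseg m u hd hz⟩

lemma entersInterior_orbitClosure_segNhd (hl : Tendsto (g^[·] y) atTop (𝓝ˢ M)) (hr : 0 < r) :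
    EntersInterior g Y (orbitClosure g (segNhd M Y r)) y := by
  obtain ⟨n, hn⟩ := (hl.eventually (Metric.isOpen_thickening.mem_nhdsSet.2
    (Metric.self_subset_thickening hr M))).exists
  obtain ⟨m, hm, hd⟩ := Metric.mem_thickening_iff.1 hn
  refine ⟨n, mem_of_superset ?_ subset_orbitClosure⟩
  filter_upwards [mem_nhdsWithin_of_mem_nhds (Metric.isOpen_ball.mem_nhds hd),
    self_mem_nhdsWithin] with u hu huY
  exact ⟨m, hm, u, huY, Metric.mem_ball'.1 hu, right_mem_seg m u⟩

theorem NoAttraction.exists_entersInterior (hN : NoAttraction g n) (hX : IsTree X)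
    (hg : Continuous g) (hns : ¬HasHorseshoe g) (hY : InvContinuum g Y) (hM : InvContinuum g M)
    (hMY : M ⊆ Y) (hends : RelEndsLE Y M (n + 1)) (hyM : y ∉ M)
    (hl : Tendsto (g^[·] y) atTop (𝓝ˢ M)) :
    ∃ K, InvContinuum g K ∧ M ⊆ K ∧ K ⊆ Y ∧ y ∉ K ∧ EntersInterior g Y K y := by
  have hT : ShrinksTo (segNhd M Y) M := shrinksTo_segNhd hX hM.isConnected hMY
  have hTY (r : ℝ) : segNhd M Y r ⊆ Y := segNhd_subset hY.isPreconnected hMY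
  have hy : y ∉ limitHull g (segNhd M Y) :=
    hN.notMem_limitHull hX hg hns hY hM hMY hends hT hTY hyM hl
  simp only [limitHull, mem_iInter, not_forall] at hy
  obtain ⟨r, hr, hyr⟩ := hy
  exact ⟨_, hT.invContinuum_orbitClosure hg hM hr, (hT.subset r hr).trans subset_orbitClosure,
    hY.orbitClosure_subset (hTY r), hyr, entersInterior_orbitClosure_segNhd hl hr⟩

end SegmentNeighbourhoods

section EnteringInterior

variable {X : Type*} [PseudoMetricSpace X] {g : X → X} {K Y : Set X} {x : X}

lemma EntersInterior.of_iterate {n : ℕ} (h : EntersInterior g Y K (g^[n] x)) :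
    EntersInterior g Y K x := by
  obtain ⟨m, hm⟩ := h
  exact ⟨m + n, by rwa [iterate_add_apply]⟩

lemma isOpen_setOf_entersInterior (hg : Continuous g) : IsOpen {v | EntersInterior g Y K v} := by
  have hopen : IsOpen {v | K ∈ 𝓝[Y] v} :=
    isOpen_iff_eventually.2 fun _ hv => eventually_nhds_nhdsWithin.2 hv
  simp only [EntersInterior, ofPred_exists]
  exact isOpen_iUnion fun m => hopen.preimage (hg.iterate m)

end EnteringInterior

section GrowingAlongSegments

variable {X : Type*} [MetricSpace X] {g : X → X} {K Y : Set X} {a b q r : X}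

lemma InvContinuum.exists_iterate_eq_not_returning (hK : InvContinuum g K) (hX : IsTree X)
    (hg : Continuous g) (hns : ¬HasHorseshoe g) (hb : IsGate K b a) (haK : a ∉ K)
    (hl : Tendsto (g^[·] a) atTop (𝓝ˢ K)) :
    ∃ r ∈ seg b a, (∃ P, g^[P] r = a) ∧ ∀ x ∈ seg b r, x ≠ r → ∀ n, g^[n] x ≠ r := by
  by_contra! hcon
  have hprev {w : X} {P : ℕ} (hw : w ∈ seg b a) (hP : g^[P] w = a) :
      ∃ x ∈ seg b w, x ≠ w ∧ x ≠ b ∧ ∃ P, g^[P] x = a := by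
    obtain ⟨x, hx, hxw, n, hn⟩ := hcon w hw ⟨P, hP⟩
    have hxa : g^[P + n] x = a := by rw [iterate_add_apply, hn, hP]
    refine ⟨x, hx, hxw, ?_, P + n, hxa⟩
    rintro rfl
    exact hK.notMem_of_iterate_notMem (hxa ▸ haK) hb.1
  obtain ⟨x, hx, hxa, hxb, P, hP⟩ := hprev (P := 0) (right_mem_seg b a) rfl
  obtain ⟨x', hx', hxx', hxb', P', hP'⟩ := hprev hx hP
  exact hns (hK.hasHorseshoe hX hg hb hl hx hxa hxb hx' hxx' hxb' hP hP')

lemma InvContinuum.orbitClosure_union_seg_subset (hK : InvContinuum g K) (hX : IsTree X)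
    (hg : Continuous g) (hb : IsGate K b r) (hrK : r ∉ K)
    (hret : ∀ x ∈ seg b r, x ≠ r → ∀ n, g^[n] x ≠ r) :
    orbitClosure g (K ∪ seg b r) ⊆ {z | r ∈ seg b z ∧ r ≠ z}ᶜ := by
  refine closure_minimal ?_ (hX.isOpen_setOf_mem_seg_ne b r).isClosed_compl
  have hrseg {z : X} (hz : z ∈ K) : r ∉ seg b z := fun h =>
    hrK (seg_subset hK.isPreconnected hb.1 hz h)
  rintro _ hz ⟨hrz, hne⟩
  obtain ⟨n, v, hv | hv, rfl⟩ := mem_forwardOrbit.1 hz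
  · exact hrseg (hK.mapsTo.iterate n hv) hrz
  obtain ⟨u, hu, hur⟩ : r ∈ g^[n] '' seg b v :=
    hX.mem_of_mem_seg_of_notMem_seg
      ((hX.isPreconnected_seg b v).image _ (hg.iterate n).continuousOn)
      (mem_image_of_mem _ (right_mem_seg b v)) (mem_image_of_mem _ (left_mem_seg b v)) hrz
      (hrseg (hK.mapsTo.iterate n hb.1))
  obtain rfl : u = r := by
    by_contra hne'
    exact hret u (hX.seg_subset_left hv hu) hne' n hur
  exact hne (hX.seg_antisymm hv hu ▸ hur.symm)

theorem InvContinuum.exists_isGate_orbitClosure (hK : InvContinuum g K) (hX : IsTree X)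
    (hg : Continuous g) (hns : ¬HasHorseshoe g) (hY : InvContinuum g Y) (hKY : K ⊆ Y)
    (hq : q ∈ Y \ K) (hb : IsGate K b q) (hent : EntersInterior g Y K q) :
    ∃ r ∈ seg b q, EntersInterior g Y K r ∧ IsGate (orbitClosure g (K ∪ seg b r)) r q ∧
      q ∉ orbitClosure g (K ∪ seg b r) := by
  obtain ⟨a, haq, hane, hab, haent⟩ := hX.exists_mem_seg_near (fun h => hq.2 (h ▸ hb.1) : q ≠ b)
    ((isOpen_setOf_entersInterior hg).mem_nhds hent)
  replace haq : a ∈ seg b q := seg_comm q b ▸ haq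
  replace haent : EntersInterior g Y K a := haent (right_mem_seg q a)
  obtain ⟨r, hra, ⟨P, hP⟩, hret⟩ := hK.exists_iterate_eq_not_returning hX hg hns
    (hb.of_mem_seg hX haq) (hb.notMem haq hab)
    (haent.tendsto hY.mapsTo hK.mapsTo (seg_subset hY.isPreconnected (hKY hb.1) hq.1 haq))
  have hrq : r ∈ seg b q := hX.seg_subset_left haq hra
  have hrne : q ≠ r := by
    rintro rfl
    exact hane (hX.seg_antisymm haq hra)
  have hrK : r ∉ K := hK.notMem_of_iterate_notMem (n := P) (hP ▸ hb.notMem haq hab)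
  have hsub := hK.orbitClosure_union_seg_subset hX hg (hb.of_mem_seg hX hrq) hrK hret
  have hgate : IsGate (orbitClosure g (K ∪ seg b r)) r q := by
    refine ⟨subset_orbitClosure (.inr (right_mem_seg b r)), fun w hw hwK => ?_⟩
    by_contra hne
    refine hsub hwK ⟨?_, Ne.symm hne⟩
    rw [seg_comm] at hw hrq ⊢
    exact hX.mem_seg_of_mem_left hrq hw
  exact ⟨r, hrq, .of_iterate (n := P) (hP.symm ▸ haent), hgate,
    hgate.notMem (right_mem_seg r q) hrne⟩

end GrowingAlongSegments

section AbsorbingBranches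

variable {X : Type*} [MetricSpace X] {g : X → X} {K K' Y S : Set X} {c v : X} {n : ℕ}

lemma EntersInterior.mono (h : EntersInterior g Y K v) (hK : K ⊆ K') : EntersInterior g Y K' v :=
  h.imp fun _ hm => mem_of_superset hm hK

/-- The points of `S` lie in pairwise distinct branches of `Y` at `K`, and the gates to these
branches are carried into the interior of `K` relative to `Y`. -/
structure AbsorbingBranches (g : X → X) (Y K S : Set X) : Prop where
  subset : S ⊆ Y \ K
  exists_isGate : ∀ c ∈ S, ∃ b, IsGate K b c ∧ EntersInterior g Y K b
  pairwise : S.Pairwise fun c c' => ¬SameBranch K c c'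

lemma AbsorbingBranches.encard_le (hS : AbsorbingBranches g Y K S) (hX : IsTree X)
    (hK : IsPreconnected K) (hends : RelEndsLE Y K n) (hfin : S.Finite) : S.encard ≤ n := by
  rw [hfin.encard_eq_coe_toFinset_card, Nat.cast_le]
  refine hends hfin.toFinset (by rw [hfin.coe_toFinset]; exact hS.subset) fun k hk => ?_
  rw [hfin.coe_toFinset]
  intro c hc c' hc' hne hmem
  obtain ⟨k', hk', hk'K⟩ := not_disjoint_iff.1 (hS.pairwise hc' hc hne.symm)
  exact notMem_seg_of_mem_seg hX hK (hS.subset hc).2 hk hk'K (seg_comm c' c ▸ hk') hmem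

/-- The invariant subcontinua of `Y` that contain `K` and avoid the branches at `K` of the points
of `S`. -/
def avoidingContinua (g : X → X) (Y K S : Set X) : Set (Set X) :=
  {L | InvContinuum g L ∧ K ⊆ L ∧ L ⊆ Y ∧ ∀ c ∈ S, ∀ v ∈ L, ¬SameBranch K c v}

/-- The largest element of `avoidingContinua g Y K S`. -/
def avoidingHull (g : X → X) (Y K S : Set X) : Set X :=
  closure (⋃₀ avoidingContinua g Y K S)

lemma InvContinuum.mem_avoidingContinua (hK : InvContinuum g K) (hKY : K ⊆ Y) :
    K ∈ avoidingContinua g Y K S :=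
  ⟨hK, Subset.rfl, hKY, fun _ _ _ hv h => h.notMem_right hv⟩

lemma subset_avoidingHull {L : Set X} (hL : L ∈ avoidingContinua g Y K S) :
    L ⊆ avoidingHull g Y K S :=
  (subset_sUnion_of_mem hL).trans subset_closure

lemma not_sameBranch_of_mem_avoidingHull (hX : IsTree X) (hK : IsClosed K) (hc : c ∈ S)
    (hv : v ∈ avoidingHull g Y K S) : ¬SameBranch K c v :=
  closure_minimal (t := {v | SameBranch K c v}ᶜ) (sUnion_subset fun _ hL => hL.2.2.2 c hc)
    (isOpen_setOf_sameBranch hX hK c).isClosed_compl hv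

lemma InvContinuum.avoidingHull_mem (hK : InvContinuum g K) (hX : IsTree X) (hg : Continuous g)
    (hY : IsClosed Y) (hKY : K ⊆ Y) :
    avoidingHull g Y K S ∈ avoidingContinua g Y K S := by
  have hKL : K ⊆ avoidingHull g Y K S := subset_avoidingHull (hK.mem_avoidingContinua hKY)
  obtain ⟨k, hk⟩ := hK.isConnected.nonempty
  have hconn : IsPreconnected (⋃₀ avoidingContinua g Y K S) :=
    isPreconnected_sUnion k _ (fun _ hL => hL.2.1 hk) fun _ hL => hL.1.isPreconnected
  have hmaps : MapsTo g (⋃₀ avoidingContinua g Y K S) (⋃₀ avoidingContinua g Y K S) :=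
    fun v ⟨L, hL, hv⟩ => ⟨L, hL, hL.1.mapsTo hv⟩
  exact ⟨⟨isClosed_closure, ⟨⟨k, hKL hk⟩, hconn.closure⟩, hmaps.closure hg⟩, hKL,
    closure_minimal (sUnion_subset fun _ hL => hL.2.2.1) hY,
    fun c hc v hv => not_sameBranch_of_mem_avoidingHull hX hK.isClosed hc hv⟩

lemma AbsorbingBranches.avoidingHull (hS : AbsorbingBranches g Y K S) (hX : IsTree X)
    (hK : InvContinuum g K) (hKY : K ⊆ Y) :
    AbsorbingBranches g Y (avoidingHull g Y K S) S where
  subset c hc := ⟨(hS.subset hc).1, fun h =>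
    not_sameBranch_of_mem_avoidingHull hX hK.isClosed hc h (.refl (hS.subset hc).2)⟩
  exists_isGate c hc := by
    have hKL := subset_avoidingHull (hK.mem_avoidingContinua (S := S) hKY)
    obtain ⟨b, hb, hent⟩ := hS.exists_isGate c hc
    refine ⟨b, ⟨hKL hb.1, fun w hw hwL => ?_⟩, hent.mono hKL⟩
    by_contra hne
    exact not_sameBranch_of_mem_avoidingHull hX hK.isClosed hc hwL (hb.sameBranch hX hw hne).symm
  pairwise := hS.pairwise.mono' fun _ _ h h' =>
    h (h'.anti (subset_avoidingHull (hK.mem_avoidingContinua hKY)))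

/-- `K` is a largest invariant subcontinuum of `Y` avoiding the branches of the points of `S`. -/
def IsMaximalAvoiding (g : X → X) (Y K S : Set X) : Prop :=
  ∀ L ∈ avoidingContinua g Y K S, L ⊆ K

lemma isMaximalAvoiding_avoidingHull (hX : IsTree X) (hK : InvContinuum g K) (hKY : K ⊆ Y) :
    IsMaximalAvoiding g Y (avoidingHull g Y K S) S := fun L ⟨hL, hsub, hLY, havoid⟩ => by
  have hKL := subset_avoidingHull (hK.mem_avoidingContinua (S := S) hKY)
  refine subset_avoidingHull ⟨hL, hKL.trans hsub, hLY, fun c hc v hv h => havoid c hc v hv ?_⟩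
  exact disjoint_left.2 fun w hw hwL => not_sameBranch_of_mem_avoidingHull hX hK.isClosed hc hwL
    (h.mono_left (hX.seg_subset_left hw))

end AbsorbingBranches

section NewBranch

variable {X : Type*} [MetricSpace X] {g : X → X} {K K' Y S : Set X} {b c d v : X}
  {n : ℕ} {r : ℝ}

lemma AbsorbingBranches.exists_notMem_branches (hS : AbsorbingBranches g Y K S) (hX : IsTree X)
    (hg : Continuous g) (hK : InvContinuum g K) (hKY : K ⊆ Y) (hspan : ChainSpans g Y K)
    (hne : S.Nonempty) (hfin : S.Finite) : ∃ d ∈ Y \ K, ∀ c ∈ S, ¬SameBranch K c d := by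
  have := hX.1
  by_contra! hall
  obtain ⟨c₀, hc₀⟩ := hne
  refine (hS.subset hc₀).2 (hspan.subset_of_entersInterior hg hK.isClosed hK.mapsTo hKY
    (fun x hx => ?_) (hS.subset hc₀).1)
  by_cases hgate : ∃ c ∈ S, IsGate K x c
  · obtain ⟨c, hc, hxc⟩ := hgate
    obtain ⟨b, hb, hent⟩ := hS.exists_isGate c hc
    exact hxc.eq hX hb hK.isPreconnected ▸ hent
  push Not at hgate
  have hev : ∀ᶠ u in 𝓝 x, ∀ c ∈ S, ¬SameBranch K c u := (hfin.eventually_all).2 fun c hc => by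
    obtain ⟨b, hb, -⟩ := hS.exists_isGate c hc
    have hbx : b ≠ x := by
      rintro rfl
      exact hgate c hc hb
    filter_upwards [hX.eventually_notMem_seg hbx] with u hu hcu
    exact hu ((hb.of_sameBranch hX hcu).mem_seg hX hK.isPreconnected hx)
  refine ⟨0, ?_⟩
  filter_upwards [mem_nhdsWithin_of_mem_nhds hev, self_mem_nhdsWithin] with u hu huY
  by_contra huK
  obtain ⟨c, hc, hcu⟩ := hall u ⟨huY, huK⟩
  exact hu c hc hcu

lemma IsGate.exists_mem_seg_entersInterior (hb : IsGate K b v) (hX : IsTree X)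
    (hg : Continuous g) (hvK : v ∉ K) (hent : EntersInterior g Y K b) :
    ∃ u ∈ seg b v, u ≠ v ∧ u ∉ K ∧ EntersInterior g Y K u := by
  obtain ⟨u, hu, hub, huv, hsub⟩ := hX.exists_mem_seg_near (fun h => hvK (h ▸ hb.1) : b ≠ v)
    ((isOpen_setOf_entersInterior hg).mem_nhds hent)
  exact ⟨u, hu, huv, hb.notMem hu hub, hsub (right_mem_seg b u)⟩

lemma IsMaximalAvoiding.exists_mem_germ_entersInterior (hmax : IsMaximalAvoiding g Y K S)
    (hS : AbsorbingBranches g Y K S) (hX : IsTree X) (hg : Continuous g) (hY : InvContinuum g Y)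
    (hK : InvContinuum g K) (hKY : K ⊆ Y) (hd : d ∈ Y \ K) (hb : IsGate K b d) (hr : 0 < r) :
    ∃ q ∈ germ K b d r, q ∉ K ∧ EntersInterior g Y K q := by
  have hT : ShrinksTo (germ K b d) K := shrinksTo_germ hX hK.isPreconnected hb.1
  obtain ⟨c, hc, v, hv, hcv⟩ : ∃ c ∈ S, ∃ v ∈ orbitClosure g (germ K b d r), SameBranch K c v := by
    by_contra! havoid
    obtain ⟨x, hx, hxb, -, hxr⟩ := hX.exists_mem_seg_near (fun h => hd.2 (h ▸ hb.1) : b ≠ d)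
      (Metric.closedBall_mem_nhds b hr)
    exact hb.notMem hx hxb (hmax _ ⟨hT.invContinuum_orbitClosure hg hK hr,
      (hT.subset r hr).trans subset_orbitClosure,
      hY.orbitClosure_subset (germ_subset hY.isPreconnected hKY hb.1 hd.1), havoid⟩
      (subset_orbitClosure (.inr ⟨hx, hxr⟩)))
  obtain ⟨b', hb', hent⟩ := hS.exists_isGate c hc
  obtain ⟨u, hu, huv, huK, huent⟩ :=
    (hb'.of_sameBranch hX hcv).exists_mem_seg_entersInterior hX hg hcv.notMem_right hent
  obtain ⟨i, q, hq, rfl⟩ := mem_forwardOrbit.1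
    (hT.mem_forwardOrbit_of_mem_seg hX hg hK hr hb'.1 hv hu huv)
  exact ⟨q, hq, hK.notMem_of_iterate_notMem huK, huent.of_iterate⟩

lemma IsMaximalAvoiding.limitHull_germ_subset (hmax : IsMaximalAvoiding g Y K S)
    (hN : NoAttraction g n) (hS : AbsorbingBranches g Y K S) (hX : IsTree X) (hg : Continuous g)
    (hns : ¬HasHorseshoe g) (hY : InvContinuum g Y) (hK : InvContinuum g K) (hKY : K ⊆ Y)
    (hends : RelEndsLE Y K (n + 1)) (hd : d ∈ Y \ K) (hb : IsGate K b d) :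
    limitHull g (germ K b d) ⊆ K := by
  have hT : ShrinksTo (germ K b d) K := shrinksTo_germ hX hK.isPreconnected hb.1
  have hH := hT.invContinuum_limitHull hX hg hK
  have hTY (r : ℝ) : germ K b d r ⊆ Y := germ_subset hY.isPreconnected hKY hb.1 hd.1
  have hHY := hY.limitHull_subset hTY
  refine hmax _ ⟨hH, hT.subset_limitHull, hHY, fun c hc v hv hcv => ?_⟩
  obtain ⟨b', hb', hent⟩ := hS.exists_isGate c hc
  obtain ⟨u, hu, -, huK, huent⟩ :=
    (hb'.of_sameBranch hX hcv).exists_mem_seg_entersInterior hX hg hcv.notMem_right hent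
  have huH := seg_subset hH.isPreconnected (hT.subset_limitHull hb'.1) hv hu
  refine huK (hN.mem_of_mem_limitHull_germ hX hg hns hY hK hKY hends hd hb huH
    (huent.tendsto hY.mapsTo hK.mapsTo (hHY huH)) fun r hr => ?_)
  obtain ⟨q, hq, hqK, hqent⟩ :=
    hmax.exists_mem_germ_entersInterior hS hX hg hY hK hKY hd hb hr
  exact ⟨q, hq, hqK, hqent.tendsto hY.mapsTo hK.mapsTo (hTY r hq)⟩

lemma IsGate.eventually_entersInterior (hb : IsGate K b c) (hX : IsTree X) (hg : Continuous g)
    (hK : IsPreconnected K) (hent : EntersInterior g Y K b) :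
    ∀ᶠ u in 𝓝ˢ K, SameBranch K c u → EntersInterior g Y K u := by
  refine eventually_nhdsSet_iff_forall.2 fun x hx => ?_
  obtain rfl | hbx := eq_or_ne b x
  · filter_upwards [(isOpen_setOf_entersInterior hg).mem_nhds hent] with u hu _ using hu
  · filter_upwards [hX.eventually_notMem_seg hbx] with u hu hcu
    exact absurd ((hb.of_sameBranch hX hcu).mem_seg hX hK hx) hu

lemma IsGate.exists_isGate_entersInterior (hb : IsGate K b c) (hX : IsTree X)
    (hK : IsPreconnected K) (hK' : InvContinuum g K') (hKK' : K ⊆ K')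
    (hent : EntersInterior g Y K b)
    (hK'ent : ∀ u ∈ K', SameBranch K c u → EntersInterior g Y K u) :
    ∃ b', IsGate K' b' c ∧ EntersInterior g Y K' b' := by
  obtain ⟨b', hb'⟩ := hX.exists_isGate hK'.isClosed hK'.isConnected.nonempty c
  refine ⟨b', hb', .mono ?_ hKK'⟩
  by_cases hbK : b' ∈ K
  · exact IsGate.eq hX hb ⟨hbK, fun w hw hwK => hb'.2 w hw (hKK' hwK)⟩ hK ▸ hent
  · refine hK'ent b' hb'.1 (SameBranch.symm (disjoint_left.2 fun w hw hwK => hbK ?_))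
    exact hb'.2 w hw (hKK' hwK) ▸ hwK

end NewBranch

section Induction

variable {X : Type*} [MetricSpace X] {g : X → X} {K M Y S : Set X} {b d q r : X} {n : ℕ}

lemma InvContinuum.invContinuum_orbitClosure_union_seg (hK : InvContinuum g K) (hX : IsTree X)
    (hg : Continuous g) (hb : b ∈ K) : InvContinuum g (orbitClosure g (K ∪ seg b r)) :=
  hK.invContinuum_orbitClosure hg
    (hK.isPreconnected.union b hb (left_mem_seg b r) (hX.isPreconnected_seg b r))
    subset_union_left

lemma subset_orbitClosure_union_seg : K ⊆ orbitClosure g (K ∪ seg b r) :=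
  subset_union_left.trans subset_orbitClosure

lemma germ_union_seg_subset (hX : IsTree X) {ε : ℝ} (hq : q ∈ germ K b d ε) (hqK : q ∉ K)
    (hr : r ∈ seg b q) : K ∪ seg b r ⊆ germ K b d ε :=
  union_subset_union_right _ fun _ hw =>
    have hwq := hX.seg_subset_left hr hw
    ⟨hX.seg_subset_left (hq.resolve_left hqK).1 hwq,
      (hX.seg_subset_left hwq).trans (hq.resolve_left hqK).2⟩

lemma IsMaximalAvoiding.exists_germ_orbitClosure (hmax : IsMaximalAvoiding g Y K S)
    (hN : NoAttraction g n) (hS : AbsorbingBranches g Y K S) (hX : IsTree X) (hg : Continuous g)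
    (hns : ¬HasHorseshoe g) (hY : InvContinuum g Y) (hK : InvContinuum g K) (hKY : K ⊆ Y)
    (hends : RelEndsLE Y K (n + 1)) (hfin : S.Finite) (hd : d ∈ Y \ K) (hb : IsGate K b d) :
    ∃ ε > 0, ∀ u ∈ orbitClosure g (germ K b d ε),
      ∀ c ∈ S, u ≠ c ∧ (SameBranch K c u → EntersInterior g Y K u) := by
  have := hX.1
  have hev : ∀ᶠ u in 𝓝ˢ K, ∀ c ∈ S, u ≠ c ∧ (SameBranch K c u → EntersInterior g Y K u) := by
    refine (hfin.eventually_all).2 fun c hc => ?_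
    obtain ⟨b', hb', hent⟩ := hS.exists_isGate c hc
    have hne : ∀ᶠ u in 𝓝ˢ K, u ≠ c := isOpen_compl_singleton.mem_nhdsSet.2
      (subset_compl_singleton_iff.2 (hS.subset hc).2)
    exact hne.and (hb'.eventually_entersInterior hX hg hK.isPreconnected hent)
  obtain ⟨U, hU, hKU, hUsub⟩ := mem_nhdsSet_iff_exists.1 hev
  obtain ⟨ε, hε, hεU⟩ := (shrinksTo_germ hX hK.isPreconnected hb.1).exists_orbitClosure_subset hU
    ((hmax.limitHull_germ_subset hN hS hX hg hns hY hK hKY hends hd hb).trans hKU)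
  exact ⟨ε, hε, fun u hu => hUsub (hεU hu)⟩

theorem AbsorbingBranches.exists_insert (hS : AbsorbingBranches g Y K S) (hN : NoAttraction g n)
    (hX : IsTree X) (hg : Continuous g) (hns : ¬HasHorseshoe g) (hY : InvContinuum g Y)
    (hK : InvContinuum g K) (hKY : K ⊆ Y) (hspan : ChainSpans g Y K)
    (hends : RelEndsLE Y K (n + 1)) (hmax : IsMaximalAvoiding g Y K S) (hne : S.Nonempty)
    (hfin : S.Finite) :
    ∃ K', InvContinuum g K' ∧ K ⊆ K' ∧ K' ⊆ Y ∧ ∃ q ∉ S, AbsorbingBranches g Y K' (insert q S) := by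
  obtain ⟨d, hd, hdS⟩ := hS.exists_notMem_branches hX hg hK hKY hspan hne hfin
  obtain ⟨b, hb⟩ := hX.exists_isGate hK.isClosed hK.isConnected.nonempty d
  have hGY (ε : ℝ) : germ K b d ε ⊆ Y := germ_subset hY.isPreconnected hKY hb.1 hd.1
  obtain ⟨ε, hε, hgerm⟩ :=
    hmax.exists_germ_orbitClosure hN hS hX hg hns hY hK hKY hends hfin hd hb
  obtain ⟨q, hqG, hqK, hqent⟩ := hmax.exists_mem_germ_entersInterior hS hX hg hY hK hKY hd hb hε
  have hqd : q ∈ seg b d := (hqG.resolve_left hqK).1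
  obtain ⟨r, hr, hrent, hrgate, hqK'⟩ := hK.exists_isGate_orbitClosure hX hg hns hY hKY
    ⟨hGY ε hqG, hqK⟩ (hb.of_mem_seg hX hqd) hqent
  have hK'G := orbitClosure_mono (g := g) (germ_union_seg_subset hX hqG hqK hr)
  have hKK' : K ⊆ orbitClosure g (K ∪ seg b r) := subset_orbitClosure_union_seg
  have hqdK : SameBranch K q d := hb.sameBranch hX hqd fun h => hqK (h ▸ hb.1)
  have hqS (c : X) (hc : c ∈ S) : ¬SameBranch (orbitClosure g (K ∪ seg b r)) q c := fun h =>
    hdS c hc ((h.anti hKK').symm.trans hX hqdK)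
  have hK' := hK.invContinuum_orbitClosure_union_seg (r := r) hX hg hb.1
  refine ⟨_, hK', hKK', hK'G.trans (hY.orbitClosure_subset (hGY ε)), q, fun h => hdS q h hqdK,
    ⟨insert_subset ⟨hGY ε hqG, hqK'⟩ fun c hc => ⟨(hS.subset hc).1, fun h =>
      (hgerm c (hK'G h) c hc).1 rfl⟩, ?_, ?_⟩⟩
  · rintro c (rfl | hc)
    · exact ⟨r, hrgate, hrent.mono hKK'⟩
    · obtain ⟨b', hb', hent⟩ := hS.exists_isGate c hc
      exact hb'.exists_isGate_entersInterior hX hK.isPreconnected hK' hKK' hent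
        fun u hu => (hgerm u (hK'G hu) c hc).2
  · exact (hS.pairwise.mono' fun _ _ h h' => h (h'.anti hKK')).insert fun c hc _ =>
      ⟨hqS c hc, fun h => hqS c hc h.symm⟩

/-- Some invariant continuum between `M` and `Y` has `N` absorbing branches. -/
def HasAbsorbingBranches (g : X → X) (Y M : Set X) (N : ℕ) : Prop :=
  ∃ K, InvContinuum g K ∧ M ⊆ K ∧ K ⊆ Y ∧ ∃ S : Set X, S.encard = N ∧ AbsorbingBranches g Y K S

lemma HasAbsorbingBranches.le {N : ℕ} (h : HasAbsorbingBranches g Y M N) (hX : IsTree X)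
    (hends : RelEndsLE Y M n) : N ≤ n := by
  obtain ⟨K, hK, hMK, -, S, hcard, hS⟩ := h
  exact_mod_cast hcard ▸
    hS.encard_le hX hK.isPreconnected (hends.mono hMK) (finite_of_encard_eq_coe hcard)

lemma NoAttraction.hasAbsorbingBranches_one (hN : NoAttraction g n) (hX : IsTree X)
    (hg : Continuous g) (hns : ¬HasHorseshoe g) (hY : InvContinuum g Y) (hM : InvContinuum g M)
    (hMY : M ⊆ Y) (hends : RelEndsLE Y M (n + 1)) (hq : q ∈ Y \ M)
    (hl : Tendsto (g^[·] q) atTop (𝓝ˢ M)) : HasAbsorbingBranches g Y M 1 := by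
  obtain ⟨K, hK, hMK, hKY, hqK, hqent⟩ :=
    hN.exists_entersInterior hX hg hns hY hM hMY hends hq.2 hl
  obtain ⟨b, hb⟩ := hX.exists_isGate hK.isClosed hK.isConnected.nonempty q
  obtain ⟨r, hr, hrent, hrgate, hqK'⟩ :=
    hK.exists_isGate_orbitClosure hX hg hns hY hKY ⟨hq.1, hqK⟩ hb hqent
  have hKK' : K ⊆ orbitClosure g (K ∪ seg b r) := subset_orbitClosure_union_seg
  have hrY : seg b r ⊆ Y :=
    (hX.seg_subset_left hr).trans (seg_subset hY.isPreconnected (hKY hb.1) hq.1)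
  refine ⟨_, hK.invContinuum_orbitClosure_union_seg hX hg hb.1, hMK.trans hKK',
    hY.orbitClosure_subset (union_subset hKY hrY), {q}, encard_singleton q,
    ⟨singleton_subset_iff.2 ⟨hq.1, hqK'⟩, ?_, pairwise_singleton q _⟩⟩
  rintro c rfl
  exact ⟨r, hrgate, hrent.mono hKK'⟩

lemma NoAttraction.hasAbsorbingBranches_succ (hN : NoAttraction g n) (hX : IsTree X)
    (hg : Continuous g) (hns : ¬HasHorseshoe g) (hY : InvContinuum g Y)
    (hspan : ChainSpans g Y M) (hends : RelEndsLE Y M (n + 1)) {N : ℕ} (hN0 : N ≠ 0)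
    (h : HasAbsorbingBranches g Y M N) : HasAbsorbingBranches g Y M (N + 1) := by
  obtain ⟨K, hK, hMK, hKY, S, hcard, hS⟩ := h
  have hne : S.Nonempty := encard_ne_zero.1 (hcard ▸ Nat.cast_ne_zero.2 hN0)
  obtain ⟨hL, hKL, hLY, -⟩ := hK.avoidingHull_mem (S := S) hX hg hY.isClosed hKY
  have hML := hMK.trans hKL
  obtain ⟨K', hK', hLK', hK'Y, q, hqS, hS'⟩ := (hS.avoidingHull hX hK hKY).exists_insert hN hX hg
    hns hY hL hLY (hspan.mono hML) (hends.mono hML) (isMaximalAvoiding_avoidingHull hX hK hKY) hne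
    (finite_of_encard_eq_coe hcard)
  refine ⟨K', hK', hML.trans hLK', hK'Y, insert q S, ?_, hS'⟩
  rw [encard_insert_of_notMem hqS, hcard, Nat.cast_succ]

theorem noAttraction (hX : IsTree X) (hg : Continuous g) (hns : ¬HasHorseshoe g) (n : ℕ) :
    NoAttraction g n := by
  induction n with
  | zero =>
    intro Y K _ _ _ _ hends y hy _
    by_contra hyK
    have hcard := hends {y} (by simpa using ⟨hy, hyK⟩) fun k _ => by simp
    rw [Finset.card_singleton] at hcard
    exact hcard.not_gt zero_lt_one
  | succ n hN =>
    intro Y M hY hM hMY hspan hends y hy hl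
    by_contra hyM
    have habs (N : ℕ) : HasAbsorbingBranches g Y M (N + 1) := by
      induction N with
      | zero => exact hN.hasAbsorbingBranches_one hX hg hns hY hM hMY hends ⟨hy, hyM⟩ hl
      | succ N h =>
        exact hN.hasAbsorbingBranches_succ hX hg hns hY hspan hends N.succ_ne_zero h
    exact Nat.not_succ_le_self (n + 1) ((habs (n + 1)).le hX hends)

end Induction

section ChainHull

variable {X : Type*} [MetricSpace X] {g : X → X} {M : Set X} {m y : X} {ε : ℝ}

/-- The chain hull of `M`: the set of points that can be reached from `M` by `ε`-chains for every
`ε > 0`. -/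
def chainHull (g : X → X) (M : Set X) : Set X :=
  {z | ∀ ε > 0, ChainReachable g univ M ε z}

lemma subset_chainHull : M ⊆ chainHull g M := fun _ hz _ _ => .base hz

lemma mapsTo_chainHull : MapsTo g (chainHull g M) (chainHull g M) := fun z hz ε hε =>
  .step (hz ε hε) (mem_univ _) (by rwa [dist_self])

lemma biInter_closure_chainReachable (hM : IsClosed M) :
    ⋂ r > 0, closure {z | ChainReachable g univ M r z} = chainHull g M := by
  refine Subset.antisymm (fun z hz ε hε => ?_) <|
    subset_iInter₂ fun r hr z hz => subset_closure (hz r hr)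
  by_cases hzM : z ∈ M
  · exact .base hzM
  obtain ⟨w, ⟨hwM, hwz⟩, hw⟩ := mem_closure_iff_nhds.1 (mem_iInter₂.1 hz (ε / 2) (half_pos hε)) _
    (inter_mem (hM.isOpen_compl.mem_nhds hzM) (Metric.ball_mem_nhds z (half_pos hε)))
  cases hw with
  | base hk => exact absurd hk hwM
  | step hp _ hd =>
    refine .step (hp.mono Subset.rfl Subset.rfl (half_le_self hε.le)) (mem_univ z) ?_
    exact (dist_triangle _ w z).trans_lt (add_halves ε ▸ add_lt_add hd (Metric.mem_ball.1 hwz))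

lemma isClosed_chainHull (hM : IsClosed M) : IsClosed (chainHull g M) :=
  biInter_closure_chainReachable hM ▸ isClosed_biInter fun _ _ => isClosed_closure

lemma InvContinuum.exists_chainReachable_of_mem_seg (hM : InvContinuum g M) (hX : IsTree X)
    (hg : Continuous g) (hm : m ∈ M) (hε : 0 < ε) :
    ∃ δ > 0, ∀ z, ChainReachable g univ M δ z → ∀ v ∈ seg m z, ChainReachable g univ M ε v := by
  obtain ⟨δ, hδ, hball⟩ := hX.exists_forall_seg_subset_ball hε
  refine ⟨δ, hδ, fun z hz => ?_⟩
  induction hz with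
  | base hk => exact fun v hv => .base (seg_subset hM.isPreconnected hm hk hv)
  | @step p q _ _ hd ih =>
    intro v hv
    rcases hX.seg_subset_union m (g p) q hv with h | h
    · have hconn : IsPreconnected (M ∪ g '' seg m p) :=
        hM.isPreconnected.union (g m) (hM.mapsTo hm) (mem_image_of_mem g (left_mem_seg m p))
          ((hX.isPreconnected_seg m p).image g hg.continuousOn)
      rcases seg_subset hconn (.inl hm) (.inr (mem_image_of_mem g (right_mem_seg m p))) h with
        hvM | ⟨w, hw, rfl⟩
      · exact .base hvM
      · exact .step (ih w hw) (mem_univ _) (by rwa [dist_self])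
    · exact .step (ih p (right_mem_seg m p)) (mem_univ v) (Metric.mem_ball'.1 (hball _ _ hd h))

lemma InvContinuum.invContinuum_chainHull (hM : InvContinuum g M) (hX : IsTree X)
    (hg : Continuous g) : InvContinuum g (chainHull g M) where
  isClosed := isClosed_chainHull hM.isClosed
  isConnected := by
    obtain ⟨m, hm⟩ := hM.isConnected.nonempty
    refine ⟨⟨m, subset_chainHull hm⟩,
      hX.isPreconnected_of_seg_subset (p := m) fun z hz v hv ε hε => ?_⟩
    obtain ⟨δ, hδ, h⟩ := hM.exists_chainReachable_of_mem_seg hX hg hm hε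
    exact h z (hz δ hδ) v hv
  mapsTo := mapsTo_chainHull

lemma chainSpans_chainHull [CompactSpace X] (hg : Continuous g) (hM : IsClosed M) :
    ChainSpans g (chainHull g M) M := by
  refine chainSpans_of_forall_thickening (CompactSpace.uniformContinuous_of_continuous hg) hM
    fun η hη z hz => ?_
  obtain ⟨r, hr, hsub⟩ := exists_pos_subset_of_biInter_subset
    (fun _ _ h => closure_mono fun _ hz => hz.mono Subset.rfl Subset.rfl h)
    (fun _ => isClosed_closure) Metric.isOpen_thickening
    ((biInter_closure_chainReachable hM).trans_subset
      (Metric.self_subset_thickening hη (chainHull g M)))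
  exact (hz _ (lt_min hr hη)).confine.mono
    (fun _ hw => hsub (subset_closure (hw.mono Subset.rfl Subset.rfl (min_le_left _ _))))
    (Metric.self_subset_thickening hη M) (min_le_right _ _)

theorem InvContinuum.mem_of_mem_chainHull (hM : InvContinuum g M) (hX : IsTree X)
    (hg : Continuous g) (hns : ¬HasHorseshoe g) (hy : y ∈ chainHull g M)
    (hl : Tendsto (g^[·] y) atTop (𝓝ˢ M)) : y ∈ M := by
  have := hX.1
  obtain ⟨N, hN⟩ := hX.exists_card_le
  obtain ⟨m, hm⟩ := hM.isConnected.nonempty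
  exact noAttraction hX hg hns N (hM.invContinuum_chainHull hX hg) hM subset_chainHull
    (chainSpans_chainHull hg hM.isClosed) (fun S _ hanti => hN S m (hanti m hm)) y hy hl

end ChainHull

section Limits

variable {X : Type*} {f g : X → X} {K : Set X} {x y : X}

lemma tendsto_iterate_iterate {l : Filter X} {s : ℕ} (h : Tendsto (f^[·] x) atTop l)
    (hs : 1 ≤ s) : Tendsto ((f^[s])^[·] x) atTop l := by
  simpa only [comp_def, id_eq, iterate_mul] using h.comp (tendsto_id.const_mul_atTop' hs)

variable [TopologicalSpace X]

lemma tendsto_nhdsSet_of_omegaLimitSet_subset [CompactSpace X] (h : omegaLimitSet f x ⊆ K) :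
    Tendsto (f^[·] x) atTop (𝓝ˢ K) := by
  refine (hasBasis_nhdsSet K).tendsto_right_iff.2 fun U ⟨hU, hKU⟩ => ?_
  have hanti : Antitone fun n : ℕ => closure ((f^[·] x) '' Ici n) :=
    fun _ _ h => closure_mono (image_mono (Ici_subset_Ici.2 h))
  obtain ⟨n, hn⟩ := exists_subset_nhds_of_isCompact' hanti.directed_ge
    (fun _ => isClosed_closure.isCompact) (fun _ => isClosed_closure)
    fun z hz => hU.mem_nhds (hKU (h hz))
  exact eventually_atTop.2 ⟨n, fun k hk => hn (subset_closure (mem_image_of_mem _ hk))⟩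

theorem exists_tendsto_nhdsSet_of_biUnion [NormalSpace X] {ι : Type*} {F : Set ι} {M : ι → Set X}
    (hg : Continuous g) (hF : F.Finite) (hcl : ∀ i ∈ F, IsClosed (M i))
    (hM : ∀ i ∈ F, MapsTo g (M i) (M i)) (hd : F.PairwiseDisjoint M)
    (hl : Tendsto (g^[·] y) atTop (𝓝ˢ (⋃ i ∈ F, M i))) :
    ∃ i ∈ F, Tendsto (g^[·] y) atTop (𝓝ˢ (M i)) := by
  obtain ⟨V, hV, hVd⟩ := Set.PairwiseDisjoint.exists_mem_filter (l := fun i => 𝓝ˢ (M i))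
    (fun i hi j hj hij => disjoint_nhdsSet_nhdsSet (hcl i hi) (hcl j hj) (hd hi hj hij)) hF
  have hW : ∀ᶠ n in atTop, ∃ i ∈ F, g^[n] y ∈ V i ∧ g (g^[n] y) ∈ V i :=
    hl.eventually (p := fun z => ∃ i ∈ F, z ∈ V i ∧ g z ∈ V i) <|
      eventually_nhdsSet_iUnion₂.2 fun i hi => by
        filter_upwards [hV i, hg.tendsto_nhdsSet (hM i hi) (hV i)] with z hz hgz
        exact ⟨i, hi, hz, hgz⟩
  obtain ⟨N, hN⟩ := eventually_atTop.1 hW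
  obtain ⟨i, hi, hyi⟩ := hN N le_rfl
  have hstay : ∀ n ≥ N, g^[n] y ∈ V i ∧ g (g^[n] y) ∈ V i := fun n hn => by
    induction n, hn using Nat.le_induction with
    | base => exact hyi
    | succ n hn ih =>
      obtain ⟨j, hj, hyj⟩ := hN (n + 1) (hn.trans n.le_succ)
      obtain rfl : i = j := hVd.elim_set hi hj _ (iterate_succ_apply' g n y ▸ ih.2) hyj.1
      exact hyj
  refine ⟨i, hi, fun U hU => ?_⟩
  have hU' : ∀ᶠ z in 𝓝ˢ (⋃ i ∈ F, M i), z ∈ V i → z ∈ U :=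
    eventually_nhdsSet_iUnion₂.2 fun j hj => by
      obtain rfl | hij := eq_or_ne i j
      · exact mem_of_superset hU fun _ hz _ => hz
      · exact mem_of_superset (hV j) fun z hzj hzi => absurd (hVd.elim_set hi hj z hzi hzj) hij
  rw [mem_map]
  filter_upwards [hl hU', eventually_ge_atTop N] with n hn hNn
  exact hn (hstay n hNn).1

end Limits

section ChainRecurrence

/-- `c` is a (one-sided, infinite) `δ`-pseudo-orbit of `f`. -/
def IsPseudoOrbit {X : Type*} [PseudoMetricSpace X] (f : X → X) (δ : ℝ) (c : ℕ → X) : Prop :=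
  ∀ i, dist (f (c i)) (c (i + 1)) < δ

variable {X : Type*}

section PseudoMetricSpace

variable [PseudoMetricSpace X] {f g : X → X} {M : Set X} {y : X} {δ δ' ε : ℝ} {c : ℕ → X}

lemma IsPseudoOrbit.mono (h : IsPseudoOrbit f δ c) (hδ : δ ≤ δ') : IsPseudoOrbit f δ' c :=
  fun i => (h i).trans_le hδ

lemma exists_forall_isPseudoOrbit_dist_iterate_lt (hf : UniformContinuous f) (s : ℕ)
    (hε : 0 < ε) :
    ∃ δ > 0, ∀ c, IsPseudoOrbit f δ c → ∀ i, dist (f^[s] (c i)) (c (i + s)) < ε := by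
  induction s generalizing ε with
  | zero => exact ⟨1, one_pos, fun c _ i => by simpa using hε⟩
  | succ s ih =>
    obtain ⟨η, hη, hfη⟩ := Metric.uniformContinuous_iff.1 hf (ε / 2) (half_pos hε)
    obtain ⟨δ, hδ, h⟩ := ih hη
    refine ⟨min δ (ε / 2), lt_min hδ (half_pos hε), fun c hc i => ?_⟩
    rw [iterate_succ_apply', ← add_assoc]
    exact (dist_triangle _ (f (c (i + s))) _).trans_lt (add_halves ε ▸ add_lt_add
      (hfη (h c (hc.mono (min_le_left _ _)) i)) ((hc (i + s)).trans_le (min_le_right _ _)))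

lemma exists_forall_isPseudoOrbit_chainReachable (hg : UniformContinuous g)
    (hl : Tendsto (g^[·] y) atTop (𝓝ˢ M)) (hε : 0 < ε) :
    ∃ δ > 0, ∃ k, ∀ c, IsPseudoOrbit g δ c → c 0 = y → ∀ j > k,
      ChainReachable g univ M ε (c j) := by
  obtain ⟨η, hη, hgη⟩ := Metric.uniformContinuous_iff.1 hg (ε / 2) (half_pos hε)
  obtain ⟨k, hk⟩ := (hl.eventually (Metric.thickening_mem_nhdsSet M (half_pos hη))).exists
  obtain ⟨m, hm, hkm⟩ := Metric.mem_thickening_iff.1 hk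
  obtain ⟨δ, hδ, h⟩ := exists_forall_isPseudoOrbit_dist_iterate_lt hg k (half_pos hη)
  refine ⟨min δ (ε / 2), lt_min hδ (half_pos hε), k, ?_⟩
  rintro c hc rfl j hj
  have hmk : dist m (c k) < η := by
    have hck := h c (hc.mono (min_le_left _ _)) 0
    rw [zero_add] at hck
    exact (dist_triangle_left _ _ _).trans_lt (add_halves η ▸ add_lt_add hkm hck)
  have hstep (i : ℕ) : dist (g (c i)) (c (i + 1)) < ε / 2 := (hc i).trans_le (min_le_right _ _)
  induction j, hj using Nat.le_induction with
  | base =>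
    exact .step (.base hm) (mem_univ _) ((dist_triangle _ (g (c k)) _).trans_lt
      (add_halves ε ▸ add_lt_add (hgη hmk) (hstep k)))
  | succ j _ ih => exact .step ih (mem_univ _) ((hstep j).trans (half_lt_self hε))

end PseudoMetricSpace

variable [MetricSpace X] {f : X → X} {M : Set X} {y : X} {δ : ℝ}

lemma exists_isPseudoOrbit_periodic (hy : y ∈ chainRecurrentSet f) (hδ : 0 < δ) :
    ∃ c n, IsPseudoOrbit f δ c ∧ 1 ≤ n ∧ ∀ i, c (n * i) = y := by
  obtain ⟨n, hn, c, h0, hcn, hc⟩ := hy δ hδ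
  refine ⟨fun i => c (i % n), n, fun i => ?_, hn, fun i => by simpa using h0⟩
  have hsucc : c ((i + 1) % n) = c (i % n + 1) := by
    rw [← Nat.mod_add_mod]
    obtain h | h := (Nat.succ_le_of_lt (Nat.mod_lt i hn)).eq_or_lt
    · rw [Nat.succ_eq_add_one] at h
      rw [h, Nat.mod_self, h0, hcn]
    · rw [Nat.mod_eq_of_lt h]
  simpa only [hsucc] using hc (i % n) (Nat.mod_lt i hn)

theorem mem_chainHull_iterate_of_mem_chainRecurrentSet [CompactSpace X] (hf : Continuous f) {s : ℕ}
    (hy : y ∈ chainRecurrentSet f) (hl : Tendsto ((f^[s])^[·] y) atTop (𝓝ˢ M)) :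
    y ∈ chainHull f^[s] M := fun ε hε => by
  obtain ⟨δ, hδ, k, hk⟩ := exists_forall_isPseudoOrbit_chainReachable
    (CompactSpace.uniformContinuous_of_continuous (hf.iterate s)) hl hε
  obtain ⟨δ', hδ', hs⟩ := exists_forall_isPseudoOrbit_dist_iterate_lt
    (CompactSpace.uniformContinuous_of_continuous hf) s hδ
  obtain ⟨c, n, hc, hn, hcy⟩ := exists_isPseudoOrbit_periodic hy hδ'
  have hcs : IsPseudoOrbit f^[s] δ fun i => c (s * i) := fun i => hs c hc (s * i)
  have := hk _ hcs (by simpa using hcy 0) (n * (k + 1)) (Nat.le_mul_of_pos_left _ hn)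
  rwa [mul_left_comm, hcy] at this

end ChainRecurrence

section PeriodicContinua

variable {X : Type*} [TopologicalSpace X] {f : X → X} {I : Set X} {s : ℕ}

lemma HasHorseshoe.of_iterate (h : HasHorseshoe f^[s]) (hs : 1 ≤ s) : HasHorseshoe f := by
  obtain ⟨Q, B, hQ, hB, neQ, neB, hd, m, n, hm, hn, covQ, covB⟩ := h
  rw [← iterate_mul] at covQ covB
  exact ⟨Q, B, hQ, hB, neQ, neB, hd, s * m, s * n, Nat.mul_pos hs hm, Nat.mul_pos hs hn, covQ, covB⟩

lemma invContinuum_iterate_image [T2Space X] (hf : Continuous f) (hIc : IsCompact I)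
    (hI : IsConnected I) (hmaps : MapsTo f^[s] I I) (i : ℕ) :
    InvContinuum f^[s] (f^[i] '' I) where
  isClosed := (hIc.image (hf.iterate i)).isClosed
  isConnected := hI.image _ (hf.iterate i).continuousOn
  mapsTo := Semiconj.mapsTo_image (Function.Commute.iterate_iterate_self f i s) hmaps

end PeriodicContinua

theorem chainRecurrent_preimages_subset_arcOrbit_general {X : Type*} [MetricSpace X]
    (hX : IsTree X) {f : X → X} (hf : Continuous f) (h0 : topEntropy f = 0) {x : X} {I : Set X}
    {s : ℕ} (hIc : IsCompact I) (hI : IsConnected I) (hs : 1 ≤ s) (hmaps : MapsTo f^[s] I I)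
    (hdisj : (Iio s).PairwiseDisjoint (f^[·] '' I)) (hω : omegaLimitSet f x ⊆ arcOrbit f I s)
    (n : ℕ) : f^[n] ⁻¹' {x} ∩ chainRecurrentSet f ⊆ arcOrbit f I s := by
  rintro y ⟨rfl, hy⟩
  have := hX.1
  have hns : ¬HasHorseshoe f^[s] := fun h => (h.of_iterate hs).topEntropy_ne_zero h0
  have hM := invContinuum_iterate_image hf hIc hI hmaps
  have hl : Tendsto ((f^[s])^[·] y) atTop (𝓝ˢ (arcOrbit f I s)) := tendsto_iterate_iterate
    (tendsto_iterate_of_iterate (tendsto_nhdsSet_of_omegaLimitSet_subset hω)) hs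
  obtain ⟨i, hi, hli⟩ := exists_tendsto_nhdsSet_of_biUnion (hf.iterate s)
    (Finset.range s).finite_toSet (fun i _ => (hM i).isClosed) (fun i _ => (hM i).mapsTo)
    (by rwa [Finset.coe_range]) hl
  exact mem_biUnion hi ((hM i).mem_of_mem_chainHull hX (hf.iterate s) hns
    (mem_chainHull_iterate_of_mem_chainRecurrentSet hf hy hli) hli)

/-- In the situation of Statement 9, for every `n ≥ 0` all chain recurrent
preimages of `x` under `f^n` also lie in the orbit of the periodic arc. -/
theorem chainRecurrent_preimages_subset_arcOrbit {X : Type*} [MetricSpace X] (hX : IsTree X)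
    (f : X → X) (hf : Continuous f) (h0 : topEntropy f = 0)
    {x : X} (hx : x ∈ chainRecurrentSet f) (hxp : x ∉ Function.periodicPts f)
    {I : Set X} {s : ℕ} (hI : IsPeriodicArc f I s)
    (hω : omegaLimitSet f x ⊆ arcOrbit f I s) :
    ∀ n : ℕ, f^[n] ⁻¹' {x} ∩ chainRecurrentSet f ⊆ arcOrbit f I s := by
  obtain ⟨hA, hs, hmaps, hdisj⟩ := hI
  exact chainRecurrent_preimages_subset_arcOrbit_general hX hf h0 hA.isCompact hA.isConnected hs
    hmaps (fun i hi j hj hij => hij.lt_or_gt.elim (hdisj i j · hj) fun h => (hdisj j i h hi).symm)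
    hω
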